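/- arXiv:2012.04705 — 6 statements merged into one kernel-verified Lean document; each statement's English description precedes it below -/
import Mathlib

section
/- Let N ≥ K ≥ 1 and L ≥ 1 be integers, let w be a positive integer with w ≤ ⌊K/L⌋, and set M = wN/K. Let B be the set of (w+1)-tuples of nonnegative integers summing to K−wL−1, for b ∈ B let b̂ denote the largest component of b, and let S = (K/w)·C(K−wL+w−1, w−1). Then in the (N,K,L)-CCDN there exist a file size F, an uncoded placement in which each cache stores at most M·F bits, and a delivery scheme whose worst-case rate is at most R_new(M) = Σ_{b∈B} min{ 2(K−wL) + w − 1 − b̂ , K } / (S·(w+1)); consequently the optimal rate R*(M) under uncoded placement satisfies R*(M) ≤ R_new(M). -/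
open Finset

/-- `<m>_n`: the unique element of `{1,…,n}` congruent to `m` modulo `n`. -/
def angMod (m : ℤ) (n : ℕ) : ℕ :=
  if m % (n : ℤ) = 0 then n else (m % (n : ℤ)).toNat

/-!
Index the packets of a file by the sets of `w` caches at pairwise distance at least `L` on the
circle. A user misses a packet exactly when none of the `L` caches it sees belongs to the set;
cutting the gap of the set around the user at the user then leaves a composition `b` of
`K - w * L - 1` into `w + 1` parts. Read cyclically, `b` is a pattern of `w + 1` users, each missing
one packet that all the others know. The sum of these packets is a coded symbol useful to all of
them, so it suffices to split a packet into `w + 1` parts, one for each role in the pattern.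

The pattern `b` has `K` translates. Each user can compute all but at most
`q = 2 * (K - w * L) + w - 1 - b (-1)` of their symbols by itself, so `min q K` Vandermonde
combinations of the `K` symbols let every user recover all of them. Finally, the pattern may be
rotated so that `b (-1)` is its largest component.
-/

namespace CCDN

theorem natCast_eq_neg_one (n : ℕ) : (n : ZMod (n + 1)) = -1 := by
  rw [eq_neg_iff_add_eq_zero]
  exact_mod_cast ZMod.natCast_self (n + 1)

theorem sum_zmod_eq_sum_range {A : Type*} [AddCommMonoid A] {n : ℕ} [NeZero n] (f : ZMod n → A) :
    ∑ x, f x = ∑ i ∈ range n, f i := by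
  refine sum_bij' (fun x _ => x.val) (fun i _ => i) ?_ ?_ ?_ ?_ ?_
  · exact fun x _ => mem_range.2 x.val_lt
  · exact fun i _ => mem_univ _
  · exact fun x _ => ZMod.natCast_zmod_val x
  · exact fun i hi => ZMod.val_natCast_of_lt (mem_range.1 hi)
  · exact fun x _ => by rw [ZMod.natCast_zmod_val]

theorem sum_zmod_val {A : Type*} [AddCommMonoid A] {n : ℕ} [NeZero n] (f : ℕ → A) :
    ∑ x : ZMod n, f x.val = ∑ i ∈ range n, f i := by
  rw [sum_zmod_eq_sum_range]
  exact sum_congr rfl fun i hi => by rw [ZMod.val_natCast_of_lt (mem_range.1 hi)]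

theorem sum_zmod_succ {A : Type*} [AddCommMonoid A] {n : ℕ} (f : ZMod (n + 1) → A) :
    ∑ x, f x = ∑ i ∈ range n, f i + f (-1) := by
  rw [sum_zmod_eq_sum_range, sum_range_succ, natCast_eq_neg_one]

theorem exists_le_and_lt_succ {f : ℕ → ℕ} {v : ℕ} (h0 : f 0 ≤ v) (N : ℕ) :
    ∃ m ≤ N, f m ≤ v ∧ (m < N → v < f (m + 1)) :=
  ⟨Nat.findGreatest (f · ≤ v) N, Nat.findGreatest_le N,
    Nat.findGreatest_spec (P := (f · ≤ v)) N.zero_le h0,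
    fun h => not_le.1 (Nat.findGreatest_is_greatest (P := (f · ≤ v)) (Nat.lt_succ_self _) h)⟩

/-- The offset of the `m`-th point of a cyclic configuration of points on a circle of caches,
relative to the point numbered `0`: the points `m` and `m + 1` are `L + g m` apart, and `g` is
extended periodically. -/
def offset {w : ℕ} (L : ℕ) (g : ZMod w → ℕ) (m : ℕ) : ℕ :=
  m * L + ∑ i ∈ range m, g i

section Offset

variable {w : ℕ} (L : ℕ) (g : ZMod w → ℕ)

@[simp]
theorem offset_zero : offset L g 0 = 0 := by
  simp [offset]

theorem offset_succ (m : ℕ) : offset L g (m + 1) = offset L g m + L + g m := by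
  simp only [offset, sum_range_succ]
  ring

theorem offset_self [NeZero w] : offset L g w = w * L + ∑ x, g x := by
  rw [offset, sum_zmod_eq_sum_range]

theorem offset_add (l m : ℕ) :
    offset L g (l + m) = offset L g l + offset L (fun x : ZMod w => g (x + (l : ZMod w))) m := by
  simp only [offset, sum_range_add, Nat.cast_add, add_comm (l : ZMod w)]
  ring

theorem offset_self_add (m : ℕ) : offset L g (w + m) = offset L g w + offset L g m := by
  simp [offset_add]

end Offset

variable {K L w : ℕ}

/-- A subset of `w` caches on the circle `ZMod K` in which consecutive caches are at distance at
least `L`, together with a distinguished one of its members: these index the subpackets of a file,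
which are stored in the `w` caches of the subset. Distinguishing a member makes the packets easy to
count, at the price of splitting the subpacket of each subset into `w` parts. -/
@[ext]
structure Packet (K L w : ℕ) [NeZero w] where
  /-- the distinguished cache -/
  start : ZMod K
  /-- the excess over `L` of the distances between consecutive caches -/
  gap : ZMod w → ℕ
  sum_gap : w * L + ∑ x, gap x = K

namespace Packet

variable [NeZero w]

/-- The caches storing the packet, in cyclic order. -/
def cache (p : Packet K L w) (a : ZMod w) : ZMod K :=
  p.start + offset L p.gap a.val

theorem cache_natCast (p : Packet K L w) (m : ℕ) :
    p.cache m = p.start + offset L p.gap m := by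
  have periodic : Function.Periodic (fun m => (offset L p.gap m : ZMod K)) w := fun m => by
    beta_reduce
    rw [add_comm m w, offset_self_add, offset_self, p.sum_gap]
    simp
  rw [cache, ZMod.val_natCast, periodic.map_mod_nat m]

/-- The same set of caches with another distinguished member. -/
def rotate (p : Packet K L w) (a : ZMod w) : Packet K L w where
  start := p.cache a
  gap x := p.gap (x + a)
  sum_gap := by
    rw [Fintype.sum_equiv (Equiv.addRight a) (fun x => p.gap (x + a)) p.gap fun _ => rfl, p.sum_gap]

theorem cache_rotate (p : Packet K L w) (a c : ZMod w) :
    (p.rotate a).cache c = p.cache (a + c) := by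
  conv_rhs => rw [← ZMod.natCast_zmod_val a, ← ZMod.natCast_zmod_val c, ← Nat.cast_add,
    cache_natCast, offset_add, ZMod.natCast_zmod_val]
  rw [Nat.cast_add, ← add_assoc]
  rfl

theorem rotate_rotate (p : Packet K L w) (a c : ZMod w) :
    (p.rotate a).rotate c = p.rotate (a + c) := by
  ext x
  · exact p.cache_rotate a c
  · simp only [rotate, add_assoc, add_comm a]

@[simp]
theorem rotate_zero (p : Packet K L w) : p.rotate 0 = p := by
  ext x <;> simp [rotate, cache]

/-- User `k` has access to a cache storing the packet. -/
def Known (p : Packet K L w) (k : ZMod K) : Prop :=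
  ∃ t < L, ∃ a, p.cache a = k + (t : ZMod K)

theorem Known.rotate {p : Packet K L w} {k : ZMod K} (h : p.Known k) (a : ZMod w) :
    (p.rotate a).Known k := by
  obtain ⟨t, ht, c, hc⟩ := h
  exact ⟨t, ht, c - a, by rw [cache_rotate, add_sub_cancel, hc]⟩

theorem exists_gap_of_not_known [NeZero K] (hL : 1 ≤ L) {p : Packet K L w} {k : ZMod K}
    (hk : ¬ p.Known k) : ∃ a, ∃ y < p.gap a, k = p.cache a + 1 + y := by
  set v := (k - p.start).val with hv
  have hkv : k = p.start + v := by simp [hv]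
  have hvK : v < K := ZMod.val_lt _
  obtain ⟨m, hmw, hmv, hvm⟩ :=
    exists_le_and_lt_succ (f := offset L p.gap) (v := v) (by simp) w
  have hm : m < w := hmw.lt_of_ne <| by
    rintro rfl
    rw [offset_self, p.sum_gap] at hmv
    omega
  have hnext := hvm hm
  rw [offset_succ] at hnext
  have hleft : v ≠ offset L p.gap m := fun h =>
    hk ⟨0, hL, m, by rw [cache_natCast, hkv, h, Nat.cast_zero, add_zero]⟩
  have hright : v ≤ offset L p.gap m + p.gap m := by
    by_contra! h
    refine hk ⟨offset L p.gap (m + 1) - v, by rw [offset_succ]; omega, (m + 1 : ℕ), ?_⟩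
    rw [cache_natCast, hkv, Nat.cast_sub (hvm hm).le]
    ring
  refine ⟨m, v - offset L p.gap m - 1, by omega, ?_⟩
  rw [cache_natCast, hkv, Nat.sub_sub, Nat.cast_sub (by omega)]
  push_cast
  ring

/-- A packet carries no information beyond its distinguished cache and its gaps. -/
def equivProd : Packet K L w ≃ ZMod K × {g : ZMod w → ℕ // w * L + ∑ x, g x = K} where
  toFun p := (p.start, ⟨p.gap, p.sum_gap⟩)
  invFun q := ⟨q.1, q.2, q.2.2⟩
  left_inv _ := rfl
  right_inv _ := rfl

instance : Finite {g : ZMod w → ℕ // w * L + ∑ x, g x = K} :=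
  ((Set.finite_Iic fun _ => K).subset fun g (hg : w * L + ∑ x, g x = K) x =>
    (single_le_sum (fun _ _ => Nat.zero_le _) (mem_univ x)).trans
      (hg ▸ Nat.le_add_left (∑ x, g x) (w * L))).to_subtype

instance [NeZero K] : Finite (Packet K L w) :=
  Finite.of_equiv _ equivProd.symm

theorem card_eq (h : w * L ≤ K) :
    Nat.card (Packet K L w) = K * (K - w * L + w - 1).choose (w - 1) := by
  have hw : 1 ≤ w := NeZero.one_le
  have hsum (g : ZMod w → ℕ) : w * L + ∑ x, g x = K ↔ ∑ x, g x = K - w * L := by omega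
  rw [Nat.card_congr equivProd, Nat.card_prod, Nat.card_zmod,
    Nat.card_congr (Equiv.subtypeEquivRight hsum),
    ← Nat.card_congr (Sym.equivNatSumOfFintype (ZMod w) (K - w * L)),
    Sym.natCard_sym_eq_choose, Nat.card_zmod, add_comm w,
    Nat.choose_symm_of_eq_add (show K - w * L + w - 1 = K - w * L + (w - 1) by omega)]

/-- The packets stored in cache `x`. -/
def storedIn (x : ZMod K) : Set (Packet K L w) :=
  {p | ∃ a, p.cache a = x}

theorem card_storedIn_le (x : ZMod K) :
    K * (storedIn x : Set (Packet K L w)).ncard ≤ w * Nat.card (Packet K L w) := by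
  have card_fiber (a : ZMod w) : {p : Packet K L w | p.cache a = x}.ncard ≤
      Nat.card {g : ZMod w → ℕ // w * L + ∑ x, g x = K} := by
    refine Nat.card_le_card_of_injective (fun p => (equivProd p.1).2) ?_
    rintro ⟨p, hp⟩ ⟨q, hq⟩ hpq
    have hgap : p.gap = q.gap := congrArg Subtype.val hpq
    refine Subtype.ext (Packet.ext ?_ hgap)
    have : p.cache a = q.cache a := hp.trans hq.symm
    rwa [cache, cache, hgap, add_left_inj] at this
  have hunion : (storedIn x : Set (Packet K L w)) = ⋃ a, {p | p.cache a = x} := by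
    ext p
    simp [storedIn]
  rw [hunion, Nat.card_congr equivProd, Nat.card_prod, Nat.card_zmod, mul_left_comm]
  gcongr
  calc (⋃ a, {p : Packet K L w | p.cache a = x}).ncard
      ≤ ∑ a, {p : Packet K L w | p.cache a = x}.ncard := Set.ncard_iUnion_le_of_fintype _
    _ ≤ _ := (sum_le_card_nsmul _ _ _ fun a _ => card_fiber a).trans_eq (by simp)

end Packet

/-- A cyclic pattern of `w + 1` users, which are served together by one coded symbol: for `m < w`
the user `m + 1` lies `L + gap m` after the user `m`, and the user `0` lies `gap w + 1` after the
user `w`. These are the elements of the set `B` of the paper. -/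
@[ext]
structure Round (K L w : ℕ) where
  /-- the gaps between consecutive users -/
  gap : ZMod (w + 1) → ℕ
  sum_gap : w * L + ∑ x, gap x + 1 = K

namespace Round

instance : Finite (Round K L w) :=
  .of_injective (β := Set.Iic fun _ : ZMod (w + 1) => K)
    (fun b => ⟨b.gap, fun x => (single_le_sum (fun _ _ => Nat.zero_le _) (mem_univ x)).trans <| by
      have := b.sum_gap
      change _ ≤ K
      omega⟩)
    fun _ _ h => Round.ext (congrArg Subtype.val h)

noncomputable instance : Fintype (Round K L w) :=
  Fintype.ofFinite _

/-- The same round with its users renumbered. -/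
def rotate (b : Round K L w) (i : ZMod (w + 1)) : Round K L w where
  gap x := b.gap (x + i)
  sum_gap := by
    rw [Fintype.sum_equiv (Equiv.addRight i) (fun x => b.gap (x + i)) b.gap fun _ => rfl, b.sum_gap]

theorem rotate_rotate (b : Round K L w) (i j : ZMod (w + 1)) :
    (b.rotate i).rotate j = b.rotate (j + i) := by
  ext x
  simp only [rotate, add_assoc]

@[simp]
theorem rotate_zero (b : Round K L w) : b.rotate 0 = b := by
  ext x
  simp [rotate]

theorem sum_range_gap_add (b : Round K L w) :
    w * L + ∑ m ∈ range w, b.gap m + b.gap (-1) + 1 = K := by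
  rw [add_assoc (w * L), ← sum_zmod_succ, b.sum_gap]

theorem offset_last (b : Round K L w) : offset L b.gap w + b.gap (-1) + 1 = K :=
  b.sum_range_gap_add

theorem offset_period (b : Round K L w) (m : ℕ) :
    offset L b.gap (w + 1 + m) + 1 = offset L b.gap m + K + L := by
  have := b.sum_gap
  rw [offset_self_add, offset_self, add_mul]
  omega

section Missed

variable [NeZero w]

/-- The packet missed by the user `k` when `k` has the number `0` in the round: it is stored in the
caches at the positions of the other `w` users, and the cache at the last of them is distinguished.
Thus the gap of the packet that contains `k` consists of the last gap of the round, `k` itself and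
the first gap of the round. -/
def missed (b : Round K L w) (k : ZMod K) : Packet K L w where
  start := k - (b.gap (-1) + 1 : ℕ)
  gap a := b.gap a.val + if a = 0 then b.gap (-1) + 1 else 0
  sum_gap := by
    rw [sum_add_distrib, sum_zmod_val (fun m => b.gap m), sum_ite_eq' univ, if_pos (mem_univ _),
      ← add_assoc, ← add_assoc, b.sum_range_gap_add]

theorem offset_missed (b : Round K L w) (k : ZMod K) {l : ℕ} (hl : 0 < l) (hlw : l ≤ w) :
    offset L (b.missed k).gap l = offset L b.gap l + (b.gap (-1) + 1) := by
  have hgap : ∀ m ∈ range l,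
      (b.missed k).gap m = b.gap m + if m = 0 then b.gap (-1) + 1 else 0 := fun m hm => by
    have hm' : (m : ZMod w).val = m :=
      ZMod.val_natCast_of_lt ((mem_range.1 hm).trans_le hlw)
    simp only [missed, hm', ← ZMod.val_eq_zero]
  rw [offset, sum_congr rfl hgap, sum_add_distrib, sum_ite_eq' (range l),
    if_pos (mem_range.2 hl), offset, add_assoc]

theorem cache_missed (b : Round K L w) (k : ZMod K) {l : ℕ} (hl : 0 < l) (hlw : l ≤ w) :
    (b.missed k).cache l = k + offset L b.gap l := by
  rw [Packet.cache_natCast, b.offset_missed k hl hlw, missed]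
  push_cast
  ring

theorem exists_missed_eq (p : Packet K L w) {y : ℕ} (hy : y < p.gap 0) :
    ∃ b : Round K L w, b.missed (p.start + 1 + y) = p := by
  set g : ZMod (w + 1) → ℕ := fun x =>
    if x = -1 then y else p.gap x.val - if x = 0 then y + 1 else 0 with hg
  have hlast : g (-1) = y := if_pos rfl
  have hgap (a : ZMod w) : g a.val + (if a = 0 then y + 1 else 0) = p.gap a := by
    have ha : (a.val : ZMod (w + 1)).val = a.val :=
      ZMod.val_natCast_of_lt (a.val_lt.trans w.lt_succ_self)
    have hne : (a.val : ZMod (w + 1)) ≠ -1 := fun h =>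
      a.val_lt.ne (by rw [← ha, h, ZMod.val_neg_one])
    have hzero : (a.val : ZMod (w + 1)) = 0 ↔ a = 0 := by
      rw [← ZMod.val_eq_zero, ha, ZMod.val_eq_zero]
    simp only [hg, if_neg hne, hzero, ha, ZMod.natCast_zmod_val]
    split_ifs with h
    · rw [h]
      omega
    · rfl
  have hsum : ∑ a : ZMod w, g a.val + (y + 1) = ∑ a, p.gap a := by
    simp_rw [← hgap, sum_add_distrib, sum_ite_eq' univ, mem_univ, if_true]
  refine ⟨⟨g, ?_⟩, Packet.ext ?_ (funext fun a => ?_)⟩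
  · rw [sum_zmod_succ, ← sum_zmod_val (fun m => g m), hlast, add_assoc, add_assoc, hsum, p.sum_gap]
  · simp only [missed, hlast]
    push_cast
    ring
  · simp only [missed, hlast, hgap]

theorem exists_eq_missed_of_not_known [NeZero K] (hL : 1 ≤ L) {p : Packet K L w} {k : ZMod K}
    (hk : ¬ p.Known k) : ∃ (b : Round K L w) (l : ZMod w), p = (b.missed k).rotate l := by
  obtain ⟨a, y, hy, rfl⟩ := Packet.exists_gap_of_not_known hL hk
  obtain ⟨b, hb⟩ := exists_missed_eq (p.rotate a) (y := y) (by simpa [Packet.rotate] using hy)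
  refine ⟨b, -a, ?_⟩
  rw [show p.cache a = (p.rotate a).start from rfl, hb, Packet.rotate_rotate, add_neg_cancel,
    Packet.rotate_zero]

end Missed

/-- The `i`-th user of the round placed on the circle with user `0` at `τ`. -/
def user (c : Round K L w) (τ : ZMod K) (i : ZMod (w + 1)) : ZMod K :=
  τ + offset L c.gap i.val

section Caches

variable [NeZero w]

theorem cache_missed_user (c : Round K L w) (τ : ZMod K) (i : ZMod (w + 1)) {l : ℕ}
    (hl : 0 < l) (hlw : l ≤ w) :
    ((c.rotate i).missed (c.user τ i)).cache l = τ + offset L c.gap (i.val + l) := by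
  rw [cache_missed _ _ hl hlw, user, offset_add, ZMod.natCast_zmod_val, Nat.cast_add, add_assoc]
  rfl

theorem exists_cache_missed_of_lt (c : Round K L w) (τ : ZMod K) {i : ZMod (w + 1)} {m : ℕ}
    (him : i.val < m) (hm : m ≤ w) :
    ∃ a, ((c.rotate i).missed (c.user τ i)).cache a = τ + offset L c.gap m :=
  ⟨(m - i.val : ℕ), by
    rw [cache_missed_user _ _ _ (by omega) (by omega), Nat.add_sub_cancel' him.le]⟩

theorem exists_cache_missed_of_gt (c : Round K L w) (τ : ZMod K) {i : ZMod (w + 1)} {m : ℕ}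
    (hmi : m < i.val) :
    ∃ a, ((c.rotate i).missed (c.user τ i)).cache a + 1 = τ + offset L c.gap m + L := by
  have hi := i.val_lt
  refine ⟨(w + 1 + m - i.val : ℕ), ?_⟩
  have period := congrArg (Nat.cast (R := ZMod K)) (c.offset_period m)
  push_cast [ZMod.natCast_self] at period
  rw [cache_missed_user _ _ _ (by omega) (by omega), Nat.add_sub_cancel' (by omega), add_assoc,
    period]
  ring

theorem known_missed_user (hL : 1 ≤ L) (c : Round K L w) (τ : ZMod K) {i j : ZMod (w + 1)}
    (hij : j ≠ i) : ((c.rotate i).missed (c.user τ i)).Known (c.user τ j) := by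
  rcases (ZMod.val_injective (w + 1)).ne hij |>.lt_or_gt with h | h
  · obtain ⟨a, ha⟩ := c.exists_cache_missed_of_gt τ h
    refine ⟨L - 1, by omega, a, ?_⟩
    rw [Nat.cast_sub hL, Nat.cast_one, eq_sub_of_add_eq ha, add_sub_assoc]
    rfl
  · obtain ⟨a, ha⟩ := c.exists_cache_missed_of_lt τ h (Nat.lt_succ_iff.1 j.val_lt)
    exact ⟨0, hL, a, by rw [ha, user, Nat.cast_zero, add_zero]⟩

end Caches

/-- The positions, relative to the user `0` of the round, of the users that may miss some packet of
the coded symbol of the round. The packet of the user `i` has a cache at the user `m` if `i < m`,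
and at distance `L - 1` after the user `m` if `m < i`, whence the two families of intervals. -/
def unknownRange (c : Round K L w) : Finset ℕ :=
  ((range (w + 1)).biUnion fun m => Icc (offset L c.gap m) (offset L c.gap m + c.gap m)) ∪
    (range w).biUnion fun m => Ico (offset L c.gap m + L) (offset L c.gap (m + 1))

theorem card_unknownRange_le (c : Round K L w) :
    #c.unknownRange ≤ 2 * (K - w * L) + w - 1 - c.gap (-1) := by
  have hlast := c.sum_range_gap_add
  have hsum := c.sum_gap
  have card_Icc_le : #((range (w + 1)).biUnion
      fun m => Icc (offset L c.gap m) (offset L c.gap m + c.gap m)) ≤ ∑ x, c.gap x + (w + 1) := by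
    refine card_biUnion_le.trans_eq ?_
    simp [sum_zmod_eq_sum_range, Nat.card_Icc, add_assoc, sum_add_distrib]
  have card_Ico_le : #((range w).biUnion
      fun m => Ico (offset L c.gap m + L) (offset L c.gap (m + 1))) ≤ ∑ m ∈ range w, c.gap m := by
    exact card_biUnion_le.trans_eq (by simp [offset_succ])
  have := card_union_le _ _ |>.trans (Nat.add_le_add card_Icc_le card_Ico_le)
  rw [unknownRange]
  omega

theorem mem_unknownRange_of_not_known [NeZero w] (hL : 1 ≤ L) (c : Round K L w) {τ : ZMod K}
    {i : ZMod (w + 1)} {v : ℕ} (hv : v < K)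
    (h : ¬ ((c.rotate i).missed (c.user τ i)).Known (τ + v)) : v ∈ c.unknownRange := by
  obtain ⟨m, hmw, hmv, hvm⟩ :=
    exists_le_and_lt_succ (f := offset L c.gap) (v := v) (by simp) w
  simp only [unknownRange, mem_union, mem_biUnion, mem_range, mem_Icc, mem_Ico]
  by_contra! hmem
  have hgap : offset L c.gap m + c.gap m < v := hmem.1 m (by omega) hmv
  have hmw : m < w := hmw.lt_of_ne <| by
    rintro rfl
    have := c.offset_last
    rw [natCast_eq_neg_one] at hgap
    omega
  have hvL : v < offset L c.gap m + L := by
    by_contra! hLv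
    exact (hmem.2 m hmw hLv).not_gt (hvm hmw)
  have hsucc := offset_succ L c.gap m
  apply h
  rcases lt_or_ge m i.val with hmi | him
  · obtain ⟨a, ha⟩ := c.exists_cache_missed_of_gt τ hmi
    refine ⟨offset L c.gap m + L - 1 - v, by omega, a, ?_⟩
    rw [eq_sub_of_add_eq ha, Nat.cast_sub (by omega), Nat.cast_sub (by omega)]
    push_cast
    ring
  · obtain ⟨a, ha⟩ := c.exists_cache_missed_of_lt τ (Nat.lt_succ_of_le him) hmw
    refine ⟨offset L c.gap (m + 1) - v, by omega, a, ?_⟩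
    rw [ha, Nat.cast_sub (hvm hmw).le]
    ring

end Round

theorem eq_zero_of_forall_sum_pow_mul_eq_zero {R ι : Type*} [CommRing R] [IsDomain R] [Fintype ι]
    {α : ι → R} (hα : Function.Injective α) {v : ι → R} {s : Finset ι} {q : ℕ} (hs : #s ≤ q)
    (hv : ∀ i ∉ s, v i = 0) (h : ∀ e < q, ∑ i, α i ^ e * v i = 0) : v = 0 := by
  have hzero : (fun j => v (s.equivFin.symm j)) = 0 := by
    refine Matrix.eq_zero_of_forall_pow_sum_mul_pow_eq_zero
      (hα.comp (Subtype.val_injective.comp s.equivFin.symm.injective)) fun e => ?_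
    calc ∑ j, v (s.equivFin.symm j) * α (s.equivFin.symm j) ^ (e : ℕ)
        = ∑ i : s, v i * α i ^ (e : ℕ) :=
          s.equivFin.symm.sum_comp fun i : s => v i * α i ^ (e : ℕ)
      _ = ∑ i ∈ s, v i * α i ^ (e : ℕ) := sum_coe_sort s fun i => v i * α i ^ (e : ℕ)
      _ = ∑ i, α i ^ (e : ℕ) * v i := by
          simp_rw [mul_comm (v _)]
          exact sum_subset s.subset_univ fun i _ hi => by rw [hv i hi, mul_zero]
      _ = 0 := h e (e.2.trans_le hs)
  funext i
  by_cases hi : i ∈ s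
  · simpa using congrFun hzero (s.equivFin ⟨i, hi⟩)
  · exact hv i hi

namespace Round

section Symbol

variable [NeZero w] {R : Type*} [CommRing R]

/-- The coded symbol of the round with user `0` at `τ`: the sum of the packets that its users miss.
Here `f i j p` is the part, reserved for users with number `i`, of the packet `p` of the file
requested by user `j`, and `l` selects the distinguished cache of the packets. -/
def symbol (c : Round K L w) (l : ZMod w)
    (f : ZMod (w + 1) → ZMod K → Packet K L w → R) (τ : ZMod K) : R :=
  ∑ i, f i (c.user τ i) (((c.rotate i).missed (c.user τ i)).rotate l)

theorem symbol_eq_zero_of_notMem_unknownRange [NeZero K] (hL : 1 ≤ L) (c : Round K L w) (l : ZMod w)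
    {f : ZMod (w + 1) → ZMod K → Packet K L w → R} {k τ : ZMod K}
    (hf : ∀ i j p, p.Known k → f i j p = 0) (hτ : (k - τ).val ∉ c.unknownRange) :
    c.symbol l f τ = 0 := by
  refine sum_eq_zero fun i _ => hf _ _ _ (Packet.Known.rotate ?_ l)
  by_contra h
  refine hτ (c.mem_unknownRange_of_not_known hL (ZMod.val_lt _) (τ := τ) (i := i) ?_)
  rwa [ZMod.natCast_zmod_val, add_sub_cancel]

theorem symbol_sub_offset (hL : 1 ≤ L) (c : Round K L w) (l : ZMod w)
    {f : ZMod (w + 1) → ZMod K → Packet K L w → R} {k : ZMod K}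
    (hf : ∀ i j p, p.Known k → f i j p = 0) (i : ZMod (w + 1)) :
    c.symbol l f (k - offset L c.gap i.val) = f i k (((c.rotate i).missed k).rotate l) := by
  have huser : c.user (k - offset L c.gap i.val) i = k := sub_add_cancel _ _
  rw [symbol, Fintype.sum_eq_single i, huser]
  intro j hj
  refine hf _ _ _ (Packet.Known.rotate ?_ l)
  nth_rewrite 2 [← huser]
  exact c.known_missed_user hL _ hj.symm

theorem eq_zero_of_forall_sum_pow_mul_symbol_eq_zero [IsDomain R] [NeZero K] (hL : 1 ≤ L)
    (c : Round K L w) (l : ZMod w) {α : ZMod K → R} (hα : Function.Injective α) {q : ℕ}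
    (hq : min (2 * (K - w * L) + w - 1 - c.gap (-1)) K ≤ q)
    {f : ZMod (w + 1) → ZMod K → Packet K L w → R} {k : ZMod K}
    (hf : ∀ i j p, p.Known k → f i j p = 0)
    (h : ∀ e < q, ∑ τ, α τ ^ e * c.symbol l f τ = 0) (i : ZMod (w + 1)) :
    f i k (((c.rotate i).missed k).rotate l) = 0 := by
  set s : Finset (ZMod K) := {τ | (k - τ).val ∈ c.unknownRange} with hs
  have hcard : #s ≤ q := by
    refine (le_min ((card_le_card_of_injOn (fun τ => (k - τ).val) ?_ ?_).trans
      c.card_unknownRange_le) ?_).trans hq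
    · exact fun τ hτ => (mem_filter.1 hτ).2
    · exact fun τ _ τ' _ h => sub_right_injective (ZMod.val_injective K h)
    · exact (card_le_univ s).trans_eq (ZMod.card K)
  have hsymbol : c.symbol l f = 0 :=
    eq_zero_of_forall_sum_pow_mul_eq_zero hα hcard
      (fun τ hτ => c.symbol_eq_zero_of_notMem_unknownRange hL l hf (by simpa [hs] using hτ)) h
  rw [← c.symbol_sub_offset hL l hf, hsymbol, Pi.zero_apply]

end Symbol

theorem exists_gap_eq_sup (b : Round K L w) : ∃ x, b.gap x = univ.sup b.gap := by
  obtain ⟨x, -, hx⟩ := exists_mem_eq_sup univ univ_nonempty b.gap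
  exact ⟨x, hx.symm⟩

/-- The renumbering of the users of a round that makes its largest gap the last one. -/
noncomputable def cut (b : Round K L w) : ZMod (w + 1) :=
  b.exists_gap_eq_sup.choose + 1

theorem gap_rotate_cut (b : Round K L w) : (b.rotate b.cut).gap (-1) = univ.sup b.gap := by
  rw [← b.exists_gap_eq_sup.choose_spec]
  simp [rotate, cut]

/-- The number of field elements transmitted for a round and a choice of the distinguished cache of
its packets. -/
def load (b : Round K L w) : ℕ :=
  min (2 * (K - w * L) + w - 1 - univ.sup b.gap) K

section Transmission

variable [NeZero w] [NeZero K] {R : Type*} [CommRing R]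

/-- The `e`-th element transmitted for the round `b` and the distinguished cache `l`: the
Vandermonde combination with exponent `e` of the symbols of `b`, rotated so that its largest gap is
the last one. Here `W j p r` is the part `r` of the packet `p` of the file requested by user `j`. -/
noncomputable def transmission (α : ZMod K → R)
    (W : ZMod K → Packet K L w → ZMod (w + 1) → R) (b : Round K L w) (l : ZMod w) (e : ℕ) : R :=
  ∑ τ, α τ ^ e * (b.rotate b.cut).symbol l (fun i j p => W j p (i + b.cut)) τ

theorem transmission_sub (α : ZMod K → R) (W W' : ZMod K → Packet K L w → ZMod (w + 1) → R)
    (b : Round K L w) (l : ZMod w) (e : ℕ) :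
    transmission α (W - W') b l e = transmission α W b l e - transmission α W' b l e := by
  simp only [transmission, symbol, Pi.sub_apply, sum_sub_distrib, mul_sub]

variable [IsDomain R]

theorem eq_zero_of_forall_transmission_eq_zero (hL : 1 ≤ L) {α : ZMod K → R}
    (hα : Function.Injective α) {W : ZMod K → Packet K L w → ZMod (w + 1) → R} {k : ZMod K}
    (hknown : ∀ j p r, p.Known k → W j p r = 0)
    (h : ∀ b l, ∀ e < load b, transmission α W b l e = 0) : W k = 0 := by
  funext p r
  by_cases hp : p.Known k
  · exact hknown k p r hp
  obtain ⟨b', l, rfl⟩ := exists_eq_missed_of_not_known hL hp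
  set b := b'.rotate (-r) with hb
  have key := (b.rotate b.cut).eq_zero_of_forall_sum_pow_mul_symbol_eq_zero hL l hα
    (q := b.load) (by rw [gap_rotate_cut, load]) (f := fun i j p => W j p (i + b.cut))
    (fun i j p => hknown j p _) (h b l) (r - b.cut)
  rwa [rotate_rotate, sub_add_cancel, hb, rotate_rotate, add_neg_cancel, rotate_zero] at key

theorem eq_of_forall_transmission_eq (hL : 1 ≤ L) {α : ZMod K → R} (hα : Function.Injective α)
    {W W' : ZMod K → Packet K L w → ZMod (w + 1) → R} {k : ZMod K}
    (hknown : ∀ j p r, p.Known k → W j p r = W' j p r)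
    (h : ∀ b l, ∀ e < load b, transmission α W b l e = transmission α W' b l e) :
    W k = W' k :=
  sub_eq_zero.1 <| eq_zero_of_forall_transmission_eq_zero hL hα (W := W - W')
    (fun j p r hp => sub_eq_zero.2 (hknown j p r hp))
    fun b l e he => by rw [transmission_sub, h b l e he, sub_self]

end Transmission

end Round

theorem angMod_mem_Icc (m : ℤ) (n : ℕ) [NeZero n] : angMod m n ∈ Icc 1 n := by
  have hn : (0 : ℤ) < n := by exact_mod_cast Nat.pos_of_neZero n
  have h0 := Int.emod_nonneg m hn.ne'
  have hlt := Int.emod_lt_of_pos m hn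
  rw [angMod, mem_Icc]
  split_ifs <;> omega

theorem natCast_angMod (m : ℤ) (n : ℕ) [NeZero n] : (angMod m n : ZMod n) = m := by
  have h0 := Int.emod_nonneg m (Nat.cast_ne_zero.2 (NeZero.ne n))
  rw [angMod]
  split_ifs with h
  · rw [CharP.cast_eq_zero, (ZMod.intCast_zmod_eq_zero_iff_dvd m n).2 (Int.dvd_of_emod_eq_zero h)]
  · rw [← ZMod.intCast_mod m n]
    conv_rhs => rw [← Int.toNat_of_nonneg h0, Int.cast_natCast]

theorem angMod_val_natCast {k n : ℕ} (hk : k ∈ Icc 1 n) : angMod (k : ZMod n).val n = k := by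
  obtain ⟨h1, hkn⟩ := mem_Icc.1 hk
  rw [ZMod.val_natCast, angMod, Int.emod_eq_of_lt (by omega)
    (by exact_mod_cast Nat.mod_lt _ (h1.trans hkn))]
  rcases hkn.eq_or_lt with rfl | hlt
  · simp
  · rw [Nat.mod_eq_of_lt hlt, if_neg (by omega), Int.toNat_natCast]

/-- The placement `P` of `N` files of `F` bits each admits a delivery scheme with `ℓ` broadcast
bits: `P c` is the set of the pairs (file, bit) stored in cache `c`, `E` is the encoder and `D k`
the decoder of user `k`. Files, bits, caches and users are numbered from `1`. -/
def Delivers (N K L F ℓ : ℕ) (P : ℕ → Finset (ℕ × ℕ)) : Prop :=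
  ∃ E : (ℕ → ℕ) → ((ℕ × ℕ) → Bool) → Fin ℓ → Bool,
  ∃ D : ∀ k : ℕ, (ℕ → ℕ) → (Fin ℓ → Bool) →
      (↥((range L).biUnion fun j => P (angMod ((k : ℤ) + (j : ℤ)) K)) → Bool) → ℕ → Bool,
    ∀ d : ℕ → ℕ, (∀ k ∈ Icc 1 K, d k ∈ Icc 1 N) →
      ∀ x : ℕ × ℕ → Bool, ∀ k ∈ Icc 1 K, ∀ f ∈ Icc 1 F,
        D k d (E d x) (fun q => x q.1) f = x (d k, f)

theorem delivers_of_determined {N K L F ℓ : ℕ} {P : ℕ → Finset (ℕ × ℕ)}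
    (E : (ℕ → ℕ) → (ℕ × ℕ → Bool) → Fin ℓ → Bool)
    (hE : ∀ d : ℕ → ℕ, (∀ k ∈ Icc 1 K, d k ∈ Icc 1 N) → ∀ x x', E d x = E d x' →
      ∀ k ∈ Icc 1 K, (∀ t < L, ∀ q ∈ P (angMod ((k : ℤ) + (t : ℤ)) K), x q = x' q) →
        ∀ f ∈ Icc 1 F, x (d k, f) = x' (d k, f)) : Delivers N K L F ℓ P := by
  refine ⟨E, fun k d y z f => Function.extend
    (fun x => (E d x, fun q : ↥((range L).biUnion fun j => P (angMod ((k : ℤ) + (j : ℤ)) K)) =>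
      x q.1)) (fun x => x (d k, f)) (fun _ => false) (y, z), fun d hd x k hk f hf => ?_⟩
  refine Function.FactorsThrough.extend_apply (fun x x' h => ?_) _ x
  obtain ⟨hbroadcast, hcache⟩ := Prod.mk.inj h
  exact hE d hd x x' hbroadcast k hk (fun t ht q hq =>
    congrFun hcache ⟨q, mem_biUnion.2 ⟨t, mem_range.2 ht, hq⟩⟩) f hf

theorem exists_placement_delivers {N K L : ℕ} [NeZero K] {ι κ : Type*} [Finite ι] [Finite κ]
    (stored : ZMod K → Set ι) (enc : (ZMod K → ℕ) → (ℕ → ι → Bool) → κ → Bool)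
    (henc : ∀ d : ZMod K → ℕ, (∀ j, d j ∈ Icc 1 N) → ∀ x x', enc d x = enc d x' → ∀ k : ZMod K,
      (∀ n ∈ Icc 1 N, ∀ t < L, ∀ i ∈ stored (k + (t : ZMod K)), x n i = x' n i) →
        x (d k) = x' (d k)) :
    ∃ P : ℕ → Finset (ℕ × ℕ), (∀ c, P c ⊆ Icc 1 N ×ˢ Icc 1 (Nat.card ι)) ∧
      (∀ c, #(P c) = N * (stored c).ncard) ∧ Delivers N K L (Nat.card ι) (Nat.card κ) P := by
  set bit : ι → ℕ := fun i => Finite.equivFin ι i + 1 with hbit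
  have bit_injective : Function.Injective bit := fun i j h =>
    (Finite.equivFin ι).injective (Fin.ext (Nat.succ_injective h))
  have bit_mem (i : ι) : bit i ∈ Icc 1 (Nat.card ι) := mem_Icc.2 ⟨by simp [hbit], Fin.is_lt _⟩
  have exists_bit : ∀ f ∈ Icc 1 (Nat.card ι), ∃ i, bit i = f := fun f hf => by
    obtain ⟨h1, hF⟩ := mem_Icc.1 hf
    exact ⟨(Finite.equivFin ι).symm ⟨f - 1, by omega⟩, by simp [hbit, h1]⟩
  refine ⟨fun c => Icc 1 N ×ˢ ((stored c).toFinite.image bit).toFinset, fun c => ?_, fun c => ?_,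
    delivers_of_determined (fun d x => enc (fun j => d (angMod j.val K)) (fun n i => x (n, bit i)) ∘
      (Finite.equivFin κ).symm) fun d hd x x' hx k hk hcache f hf => ?_⟩
  · refine product_subset_product_right fun f hf => ?_
    obtain ⟨i, -, rfl⟩ := (Set.Finite.mem_toFinset _).1 hf
    exact bit_mem i
  · rw [card_product, Nat.card_Icc, Nat.add_sub_cancel,
      ← Set.ncard_eq_toFinset_card _ ((stored c).toFinite.image bit),
      Set.ncard_image_of_injective _ bit_injective]
  · obtain ⟨i, rfl⟩ := exists_bit f hf
    have := henc (fun j => d (angMod j.val K)) (fun j => hd _ (angMod_mem_Icc _ K)) _ _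
      ((Finite.equivFin κ).symm.surjective.injective_comp_right hx) k fun n hn t ht j hj =>
        hcache t ht (n, bit j) (mem_product.2 ⟨hn, (Set.Finite.mem_toFinset _).2
          ⟨j, by rw [natCast_angMod]; exact_mod_cast hj, rfl⟩⟩)
    rw [angMod_val_natCast hk] at this
    exact congrFun this i

theorem nonempty_galoisField_equiv {m : ℕ} (hm : m ≠ 0) :
    Nonempty (GaloisField 2 m ≃ (Fin m → Bool)) := by
  have : Finite (GaloisField 2 m) := Nat.finite_of_card_ne_zero (by simp [GaloisField.card 2 m hm])
  exact Finite.card_eq.1 (by simp [GaloisField.card 2 m hm])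

theorem exists_injective_galoisField (K : ℕ) [NeZero K] :
    ∃ α : ZMod K → GaloisField 2 K, Function.Injective α := by
  obtain ⟨φ⟩ := nonempty_galoisField_equiv (NeZero.ne K)
  have hcard : Fintype.card (ZMod K) ≤ Fintype.card (Fin K → Bool) := by
    simpa [ZMod.card] using K.lt_two_pow_self.le
  obtain ⟨α⟩ := Function.Embedding.nonempty_of_card_le hcard
  exact ⟨φ.symm ∘ α, φ.symm.injective.comp α.injective⟩

/-- The bits of a file: a packet, the user number for which a part of the packet is reserved, and
a bit of that part, which is an element of the field with `2 ^ K` elements. -/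
abbrev BitIndex (K L w : ℕ) [NeZero w] : Type :=
  Packet K L w × ZMod (w + 1) × Fin K

/-- The broadcast bits: a round, the distinguished caches of its packets, one of the Vandermonde
combinations of its symbols, and a bit of that field element. -/
abbrev BroadcastIndex (K L w : ℕ) : Type :=
  Σ b : Round K L w, ZMod w × Fin b.load × Fin K

theorem exists_placement_delivers_bitIndex (N : ℕ) {K L w : ℕ} [NeZero K] [NeZero w] (hL : 1 ≤ L) :
    ∃ P : ℕ → Finset (ℕ × ℕ),
      (∀ c, P c ⊆ Icc 1 N ×ˢ Icc 1 (Nat.card (BitIndex K L w))) ∧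
      (∀ c, K * #(P c) ≤ N * (w * Nat.card (BitIndex K L w))) ∧
      Delivers N K L (Nat.card (BitIndex K L w)) (Nat.card (BroadcastIndex K L w)) P := by
  obtain ⟨φ⟩ := nonempty_galoisField_equiv (NeZero.ne K)
  obtain ⟨α, hα⟩ := exists_injective_galoisField K
  let stored (c : ZMod K) : Set (BitIndex K L w) := Packet.storedIn c ×ˢ Set.univ
  let requested (d : ZMod K → ℕ) (x : ℕ → BitIndex K L w → Bool) (j : ZMod K)
      (p : Packet K L w) (r : ZMod (w + 1)) : GaloisField 2 K := φ.symm fun t => x (d j) (p, r, t)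
  let enc (d : ZMod K → ℕ) (x : ℕ → BitIndex K L w → Bool) : BroadcastIndex K L w → Bool
    | ⟨b, l, e, t⟩ => φ (Round.transmission α (requested d x) b l e) t
  have enc_determines (d : ZMod K → ℕ) (hd : ∀ j, d j ∈ Icc 1 N) (x x') (hx : enc d x = enc d x')
      (k : ZMod K) (hk : ∀ n ∈ Icc 1 N, ∀ t < L, ∀ i ∈ stored (k + (t : ZMod K)), x n i = x' n i) :
      x (d k) = x' (d k) := by
    have hrequested : requested d x k = requested d x' k := by
      refine Round.eq_of_forall_transmission_eq hL hα ?_ fun b l e he => ?_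
      · rintro j p r ⟨t, ht, hp⟩
        exact congrArg φ.symm (funext fun s => hk _ (hd j) t ht _ ⟨hp, trivial⟩)
      · exact φ.injective (funext fun t => congrFun hx ⟨b, l, ⟨e, he⟩, t⟩)
    funext ⟨p, r, t⟩
    exact congrFun (φ.symm.injective (congrFun₂ hrequested p r)) t
  obtain ⟨P, hP, hcard, hdel⟩ := exists_placement_delivers stored enc enc_determines
  refine ⟨P, hP, fun c => ?_, hdel⟩
  rw [hcard, Set.ncard_prod, Set.ncard_univ, Nat.card_prod (Packet K L w), mul_left_comm,
    ← mul_assoc K, ← mul_assoc w]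
  exact Nat.mul_le_mul_left N (Nat.mul_le_mul_right _ (Packet.card_storedIn_le _))

theorem card_bitIndex [NeZero w] (h : w * L ≤ K) :
    Nat.card (BitIndex K L w) =
      K * (K - w * L + w - 1).choose (w - 1) * ((w + 1) * K) := by
  rw [Nat.card_prod, Nat.card_prod, Packet.card_eq h, Nat.card_zmod, Nat.card_fin]

theorem card_broadcastIndex [NeZero w] :
    Nat.card (BroadcastIndex K L w) = w * K * ∑ b : Round K L w, b.load := by
  simp only [Nat.card_sigma, Nat.card_prod, Nat.card_zmod, Nat.card_fin, mul_sum]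
  exact sum_congr rfl fun b _ => by ring

theorem Round.cast_load (b : Round K L w) :
    (b.load : ℝ) = min (2 * ((K : ℝ) - w * L) + w - 1 - (univ.sup b.gap : ℕ)) K := by
  obtain ⟨x, hx⟩ := b.exists_gap_eq_sup
  have hsup := single_le_sum (f := b.gap) (fun _ _ => Nat.zero_le _) (mem_univ x)
  have hsum := b.sum_gap
  rw [load, Nat.cast_min, Nat.cast_sub (by omega), Nat.cast_sub (by omega)]
  push_cast [Nat.cast_sub (show w * L ≤ K by omega)]
  rfl

theorem sum_min_eq_sum_load {B : Finset (Fin (w + 1) → ℕ)}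
    (hB : ∀ b, b ∈ B ↔ (∑ j, (b j : ℤ)) = (K : ℤ) - (w : ℤ) * (L : ℤ) - 1) :
    ∑ b ∈ B, min (2 * ((K : ℝ) - w * L) + w - 1 - (univ.sup b : ℕ)) (K : ℝ) =
      ((∑ b : Round K L w, b.load : ℕ) : ℝ) := by
  have mem_iff (b : Fin (w + 1) → ℕ) : b ∈ B ↔ w * L + ∑ j, b j + 1 = K := by
    rw [hB]
    push_cast [← Nat.cast_inj (R := ℤ)]
    omega
  rw [Nat.cast_sum]
  refine sum_bij' (fun b hb => ⟨b, (mem_iff b).1 hb⟩) (fun b _ => b.gap) (fun _ _ => mem_univ _)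
    (fun b _ => (mem_iff b.gap).2 b.sum_gap) (fun _ _ => rfl) (fun _ _ => rfl)
    fun b hb => (Round.cast_load ⟨b, (mem_iff b).1 hb⟩).symm

end CCDN

open CCDN in
theorem stmt13_general (N K L w : ℕ) (hw : 1 ≤ w) (hwL : w ≤ K / L)
    (B : Finset (Fin (w + 1) → ℕ))
    (hB : ∀ b : Fin (w + 1) → ℕ, b ∈ B ↔ (∑ j, (b j : ℤ)) = (K : ℤ) - (w : ℤ) * (L : ℤ) - 1) :
    ∃ F : ℕ, 1 ≤ F ∧ ∃ ℓ : ℕ,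
      (∃ P : ℕ → Finset (ℕ × ℕ), (∀ c, P c ⊆ Icc 1 N ×ˢ Icc 1 F) ∧
        (∀ c, (#(P c) : ℝ) ≤ (w : ℝ) * N / K * F) ∧ Delivers N K L F ℓ P) ∧
      (ℓ : ℝ) / F ≤
        (∑ b ∈ B, min (2 * ((K : ℝ) - w * L) + w - 1 - (univ.sup b : ℕ)) (K : ℝ)) /
          ((K : ℝ) / w * (K - w * L + w - 1).choose (w - 1) * (w + 1)) := by
  have hwLK : w * L ≤ K := (Nat.mul_le_mul_right L hwL).trans (Nat.div_mul_le_self K L)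
  obtain ⟨hL, hLK⟩ := Nat.div_pos_iff.1 (hw.trans hwL)
  have hK : 0 < K := Nat.lt_of_lt_of_le hL hLK
  have : NeZero w := ⟨Nat.one_le_iff_ne_zero.1 hw⟩
  have : NeZero K := ⟨hK.ne'⟩
  obtain ⟨P, hP, hcard, hdel⟩ := exists_placement_delivers_bitIndex N (K := K) (w := w) hL
  have hchoose : 0 < (K - w * L + w - 1).choose (w - 1) := Nat.choose_pos (by omega)
  refine ⟨_, ?_, _, ⟨P, hP, fun c => ?_, hdel⟩, ?_⟩
  · rw [card_bitIndex hwLK]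
    exact Nat.succ_le_of_lt (by positivity)
  · rw [div_mul_eq_mul_div, le_div_iff₀ (by positivity)]
    exact_mod_cast (mul_comm _ _).trans_le ((hcard c).trans_eq (by ring))
  · rw [card_bitIndex hwLK, card_broadcastIndex, sum_min_eq_sum_load hB]
    push_cast
    apply le_of_eq
    field_simp

/-- Theorem 6 of the paper: for the `(N,K,L)`-CCDN at memory
point `M = wN/K` (`1 ≤ w ≤ ⌊K/L⌋`), there exist a file size `F`, an uncoded
placement storing at most `M·F` bits per cache, and a broadcast delivery scheme
of length `ℓ` correct for all demands, with rate `ℓ/F ≤ R_new(M)`, where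
`R_new(M) = Σ_{b∈B} min{2(K−wL)+w−1−b̂, K} / (S·(w+1))`, `B` is the set of weak
`(w+1)`-compositions of `K−wL−1`, `b̂` the largest component of `b`, and
`S = (K/w)·C(K−wL+w−1, w−1)`.  Consequently `R*(M) ≤ R_new(M)`. -/
theorem stmt13 (N K L w : ℕ) (hK : 1 ≤ K) (hN : K ≤ N) (hL : 1 ≤ L)
    (hw : 1 ≤ w) (hwL : w ≤ K / L)
    (M : ℝ) (hM : M = (w : ℝ) * (N : ℝ) / (K : ℝ))
    (B : Finset (Fin (w + 1) → ℕ))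
    (hB : ∀ b : Fin (w + 1) → ℕ, b ∈ B ↔ (∑ j, (b j : ℤ)) = (K : ℤ) - (w : ℤ) * (L : ℤ) - 1)
    (S : ℝ) (hS : S = (K : ℝ) / (w : ℝ) * (Nat.choose (K - w * L + w - 1) (w - 1) : ℝ))
    (Rnew : ℝ)
    (hR : Rnew = (∑ b ∈ B,
        min (2 * ((K : ℝ) - (w : ℝ) * (L : ℝ)) + (w : ℝ) - 1 - ((Finset.univ.sup b : ℕ) : ℝ))
          (K : ℝ)) / (S * ((w : ℝ) + 1))) :
    ∃ F : ℕ, 1 ≤ F ∧ ∃ ℓ : ℕ,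
      (∃ P : ℕ → Finset (ℕ × ℕ),
        -- cache `c` stores the bits of the `N` files indexed by `P c`
        (∀ c, P c ⊆ Finset.Icc 1 N ×ˢ Finset.Icc 1 F) ∧
        -- each cache stores at most `M·F` bits
        (∀ c, ((P c).card : ℝ) ≤ M * (F : ℝ)) ∧
        -- broadcast encoder: a function of the demand vector and the file bits
        ∃ E : (ℕ → ℕ) → ((ℕ × ℕ) → Bool) → Fin ℓ → Bool,
        -- decoder of user `k`: a function of the demand vector, the broadcast,
        -- and the bits stored in the `L` caches `<k>_K, …, <k+L−1>_K`
        ∃ D : ∀ _k : ℕ, (ℕ → ℕ) → (Fin ℓ → Bool) →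
            (↥((Finset.range L).biUnion fun j => P (angMod ((_k : ℤ) + (j : ℤ)) K)) → Bool) →
            ℕ → Bool,
          ∀ d : ℕ → ℕ, (∀ k ∈ Finset.Icc 1 K, d k ∈ Finset.Icc 1 N) →
            ∀ x : ℕ × ℕ → Bool, ∀ k ∈ Finset.Icc 1 K, ∀ f ∈ Finset.Icc 1 F,
              D k d (E d x) (fun q => x q.1) f = x (d k, f)) ∧
      (ℓ : ℝ) / (F : ℝ) ≤ Rnew := by
  subst hM hS hR
  exact stmt13_general N K L w hw hwL B hB
end

section
/- Let K, L, w be positive integers with w ≤ ⌊K/L⌋. Let B be the set of (w+1)-tuples of nonnegative integers summing to K−wL−1 and for b ∈ B let b̂ denote the largest component of b. Then w · Σ_{b∈B} min{ 2(K−wL) + w − 1 − b̂ , K } ≤ K·(K−wL)·C(K−wL+w−1, w−1); equivalently, with S = (K/w)·C(K−wL+w−1, w−1), the quantity R_new = Σ_{b∈B} min{2(K−wL)+w−1−b̂, K} / (S·(w+1)) satisfies R_new ≤ (K−wL)/(w+1). -/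
open Finset

/-!
Bounding every minimum by `K`, it suffices to know that `w · |B| = n · C(n + w - 1, w - 1)` with
`n = K - wL`. For `n = 0` both sides vanish. Otherwise stars and bars gives
`|B| = multichoose (w + 1) (n - 1)`, and the equality becomes the absorption identity
`k · multichoose (k + 1) m = (m + 1) · multichoose k (m + 1)`.
-/

theorem card_piAntidiag_nat_eq_multichoose {ι : Type*} [DecidableEq ι] (s : Finset ι) (n : ℕ) :
    #(s.piAntidiag n) = (#s).multichoose n := by
  rw [← card_finsuppAntidiag_nat_eq_multichoose, finsuppAntidiag, card_map, card_attach]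

theorem multichoose_eq_choose_sub_one {k : ℕ} (hk : 1 ≤ k) (n : ℕ) :
    k.multichoose n = (n + k - 1).choose (k - 1) := by
  rw [Nat.multichoose_eq, Nat.add_comm k n]
  exact Nat.choose_symm_of_eq_add (Nat.add_sub_assoc hk n)

theorem mul_multichoose_add_one_left (k m : ℕ) :
    k * (k + 1).multichoose m = (m + 1) * k.multichoose (m + 1) := by
  have absorb := Nat.choose_succ_right_eq (k + m) m
  rw [Nat.add_sub_cancel] at absorb
  rw [Nat.multichoose_eq, Nat.multichoose_eq, Nat.add_right_comm, Nat.add_sub_cancel,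
    ← Nat.add_assoc, Nat.add_sub_cancel, Nat.mul_comm k, ← absorb, Nat.mul_comm]

/- The sum is written `∑ i, b i + 1 = n` rather than `∑ i, b i = n - 1` because truncated
subtraction would make `B` nonempty, and the formula false, at `n = 0`. -/
theorem mul_card_eq_mul_multichoose_of_sum_add_one_eq {ι : Type*} [Fintype ι] {k n : ℕ}
    {B : Finset (ι → ℕ)} (hι : Fintype.card ι = k + 1)
    (hB : ∀ b, b ∈ B ↔ ∑ i, b i + 1 = n) :
    k * #B = n * k.multichoose n := by
  classical
  cases n with
  | zero =>
    have B_empty : B = ∅ := eq_empty_of_forall_notMem fun b hb ↦ Nat.succ_ne_zero _ ((hB b).1 hb)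
    simp [B_empty]
  | succ m =>
    have B_eq : B = piAntidiag univ m := by ext b; simp [hB]
    rw [B_eq, card_piAntidiag_nat_eq_multichoose, card_univ, hι, mul_multichoose_add_one_left]

/-- first part of Corollary 7 of the paper: with `B` the set of
weak `(w+1)`-compositions of `K−wL−1` and `b̂` the largest component of `b`,
`w · Σ_{b∈B} min{2(K−wL)+w−1−b̂, K} ≤ K·(K−wL)·C(K−wL+w−1, w−1)`,
i.e. `R_new ≤ (K−wL)/(w+1)` (the Hachem–Karamchandani–Diggavi rate). -/
theorem stmt14 (K L w : ℕ) (hK : 1 ≤ K) (hL : 1 ≤ L) (hw : 1 ≤ w) (hwL : w ≤ K / L)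
    (B : Finset (Fin (w + 1) → ℕ))
    (hB : ∀ b : Fin (w + 1) → ℕ, b ∈ B ↔ (∑ j, (b j : ℤ)) = (K : ℤ) - (w : ℤ) * (L : ℤ) - 1) :
    (w : ℝ) * ∑ b ∈ B,
        min (2 * ((K : ℝ) - (w : ℝ) * (L : ℝ)) + (w : ℝ) - 1 - ((Finset.univ.sup b : ℕ) : ℝ))
          (K : ℝ) ≤
      (K : ℝ) * ((K : ℝ) - (w : ℝ) * (L : ℝ)) * (Nat.choose (K - w * L + w - 1) (w - 1) : ℝ) := by
  have hwLK : w * L ≤ K := (Nat.le_div_iff_mul_le hL).1 hwL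
  have cast_sub_mul : ((K - w * L : ℕ) : ℝ) = K - w * L := by rw [Nat.cast_sub hwLK, Nat.cast_mul]
  have mem_B : ∀ b, b ∈ B ↔ ∑ j, b j + 1 = K - w * L := fun b ↦ by
    rw [hB, ← Nat.cast_sum, ← Nat.cast_mul]
    omega
  have card_B : w * #B = (K - w * L) * (K - w * L + w - 1).choose (w - 1) := by
    rw [mul_card_eq_mul_multichoose_of_sum_add_one_eq (Fintype.card_fin _) mem_B,
      multichoose_eq_choose_sub_one hw]
  calc
    _ ≤ (w : ℝ) * (#B • (K : ℝ)) := by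
      gcongr
      exact sum_le_card_nsmul _ _ _ fun _ _ ↦ min_le_right _ _
    _ = K * ((w * #B : ℕ) : ℝ) := by
      rw [nsmul_eq_mul, Nat.cast_mul]
      ring
    _ = _ := by rw [card_B, Nat.cast_mul, cast_sub_mul, mul_assoc]
end

section
/- Let K, L, w be positive integers with w ≤ ⌊K/L⌋. Let B be the set of (w+1)-tuples of nonnegative integers summing to K−wL−1 and for b ∈ B let b̂ denote the largest component of b. Then w · Σ_{b∈B} min{ 2(K−wL) + w − 1 − b̂ , K } ≤ (w+1)·(K−wL)²·C(K−wL+w−1, w−1); equivalently, with S = (K/w)·C(K−wL+w−1, w−1), the quantity R_new = Σ_{b∈B} min{2(K−wL)+w−1−b̂, K} / (S·(w+1)) satisfies R_new ≤ (K−wL)²/K = K·(1 − wL/K)². -/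
open Finset

/-!
Put `n = K - wL`, and let `n ≥ 1`. Dropping the cap `K` and using `b̂ ≥ 0`, every summand is at most
`2n + w - 1 ≤ (w + 1) n`, the last step because the difference is `(w - 1) (n - 1)`. There are
`C(n + w - 1, w)` summands, and `w C(n + w - 1, w) = n C(n + w - 1, w - 1)`.
-/

section Counting

variable {ι : Type*} [DecidableEq ι]

lemma card_piAntidiag_nat_eq_choose (s : Finset ι) (m : ℕ) :
    #(piAntidiag s m) = (#s + m - 1).choose m := by
  rw [← card_finsuppAntidiag_nat_eq_choose, finsuppAntidiag, card_map, card_attach]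

lemma pred_card_mul_card_piAntidiag (s : Finset ι) (m : ℕ) :
    (#s - 1) * #(piAntidiag s m) = (m + 1) * (#s + m - 1).choose (m + 1) := by
  have hsub : #s + m - 1 - m = #s - 1 := by lia
  rw [card_piAntidiag_nat_eq_choose, mul_comm, mul_comm (m + 1), Nat.choose_succ_right_eq, hsub]

end Counting

section Bound

variable {R ι : Type*} [CommRing R] [PartialOrder R] [IsOrderedRing R]

lemma two_mul_add_sub_one_le {w n : R} (hw : 1 ≤ w) (hn : 1 ≤ n) :
    2 * n + w - 1 ≤ (w + 1) * n := by
  have hprod : 0 ≤ (w - 1) * (n - 1) := mul_nonneg (sub_nonneg.2 hw) (sub_nonneg.2 hn)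
  linear_combination hprod

lemma mul_sum_piAntidiag_le [DecidableEq ι] {s : Finset ι} {w : ℕ} (hs : #s = w + 1)
    (hw : 1 ≤ w) (m : ℕ) :
    (w : R) * ∑ b ∈ piAntidiag s m, (2 * ((m + 1 : ℕ) : R) + w - 1 - (s.sup b : ℕ)) ≤
      (w + 1) * ((m + 1 : ℕ) : R) ^ 2 * ((m + w).choose (m + 1) : ℕ) := by
  have hcard : (w : R) * #(piAntidiag s m) =
      ((m + 1 : ℕ) : R) * ((m + w).choose (m + 1) : ℕ) := by
    have h := pred_card_mul_card_piAntidiag s m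
    rw [hs, show w + 1 - 1 = w by lia, show w + 1 + m - 1 = m + w by lia] at h
    exact_mod_cast congrArg (Nat.cast (R := R)) h
  have hterm (b : ι → ℕ) :
      2 * ((m + 1 : ℕ) : R) + w - 1 - (s.sup b : ℕ) ≤ (w + 1) * ((m + 1 : ℕ) : R) :=
    (sub_le_self _ (Nat.cast_nonneg _)).trans <|
      two_mul_add_sub_one_le (mod_cast Nat.mono_cast (α := R) hw)
        (mod_cast Nat.mono_cast (α := R) (Nat.le_add_left 1 m))
  calc
    (w : R) * ∑ b ∈ piAntidiag s m, (2 * ((m + 1 : ℕ) : R) + w - 1 - (s.sup b : ℕ))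
      ≤ w * (#(piAntidiag s m) • ((w + 1) * ((m + 1 : ℕ) : R))) :=
        mul_le_mul_of_nonneg_left (sum_le_card_nsmul _ _ _ fun b _ ↦ hterm b) (Nat.cast_nonneg w)
    _ = (w + 1) * ((m + 1 : ℕ) : R) * (w * #(piAntidiag s m)) := by
        rw [nsmul_eq_mul]; ring
    _ = (w + 1) * ((m + 1 : ℕ) : R) ^ 2 * ((m + w).choose (m + 1) : ℕ) := by
        rw [hcard]; ring

-- The sum of the components is `n - 1`; written without truncated subtraction, so that `n = 0`
-- yields the empty family rather than the zero function.
lemma mul_sum_le_of_mem_iff_sum_add_one_eq [Fintype ι] {w n : ℕ} (hι : Fintype.card ι = w + 1)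
    (hw : 1 ≤ w) {B : Finset (ι → ℕ)} (hB : ∀ b, b ∈ B ↔ ∑ j, b j + 1 = n) :
    (w : R) * ∑ b ∈ B, (2 * (n : R) + w - 1 - (univ.sup b : ℕ)) ≤
      (w + 1) * (n : R) ^ 2 * ((n + w - 1).choose (w - 1) : ℕ) := by
  classical
  cases n with
  | zero =>
    have hempty : B = ∅ := eq_empty_of_forall_notMem fun b hb ↦ Nat.succ_ne_zero _ ((hB b).1 hb)
    simp [hempty]
  | succ m =>
    have hBm : B = piAntidiag univ m := by
      ext b
      simp [hB]
    have hchoose : (m + 1 + w - 1).choose (w - 1) = (m + w).choose (m + 1) := by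
      rw [show m + 1 + w - 1 = m + w by lia]
      exact Nat.choose_symm_of_eq_add (by lia)
    rw [hBm, hchoose]
    exact mul_sum_piAntidiag_le (card_univ.trans hι) hw m

end Bound

/-- second part of Corollary 7 of the paper: with `B` the set of
weak `(w+1)`-compositions of `K−wL−1` and `b̂` the largest component of `b`,
`w · Σ_{b∈B} min{2(K−wL)+w−1−b̂, K} ≤ (w+1)·(K−wL)²·C(K−wL+w−1, w−1)`,
i.e. `R_new ≤ K(1−wL/K)²` (the Reddy–Karamchandani rate). -/
theorem stmt15 (K L w : ℕ) (hK : 1 ≤ K) (hL : 1 ≤ L) (hw : 1 ≤ w) (hwL : w ≤ K / L)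
    (B : Finset (Fin (w + 1) → ℕ))
    (hB : ∀ b : Fin (w + 1) → ℕ, b ∈ B ↔ (∑ j, (b j : ℤ)) = (K : ℤ) - (w : ℤ) * (L : ℤ) - 1) :
    (w : ℝ) * ∑ b ∈ B,
        min (2 * ((K : ℝ) - (w : ℝ) * (L : ℝ)) + (w : ℝ) - 1 - ((Finset.univ.sup b : ℕ) : ℝ))
          (K : ℝ) ≤
      ((w : ℝ) + 1) * ((K : ℝ) - (w : ℝ) * (L : ℝ)) ^ 2 *
        (Nat.choose (K - w * L + w - 1) (w - 1) : ℝ) := by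
  have hle : w * L ≤ K := Nat.mul_le_of_le_div L w K hwL
  have hcast : (K : ℝ) - w * L = (K - w * L : ℕ) := by
    rw [Nat.cast_sub hle, Nat.cast_mul]
  have hmem (b : Fin (w + 1) → ℕ) : b ∈ B ↔ ∑ j, b j + 1 = K - w * L := by
    rw [hB, ← Nat.cast_sum, ← Nat.cast_mul]
    lia
  rw [hcast]
  calc
    _ ≤ (w : ℝ) * ∑ b ∈ B, (2 * ((K - w * L : ℕ) : ℝ) + w - 1 - (univ.sup b : ℕ)) :=
      mul_le_mul_of_nonneg_left (sum_le_sum fun _ _ ↦ min_le_left _ _) (Nat.cast_nonneg w)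
    _ ≤ _ := mul_sum_le_of_mem_iff_sum_add_one_eq (Fintype.card_fin _) hw hmem
end

section
/- Let K and L be integers with K > L ≥ K/2 ≥ 1, and set n = K − L − 1. Then Σ_{a=0}^{n} ( 2(K−L) − max(a, n−a) ) equals (K−L)(5K−5L+2)/4 if n is odd, and equals ((K−L)(5K−5L+2)+1)/4 if n is even. Consequently, the quantity R_new(N/K) = Σ_{a=0}^{n} min{ 2(K−L) − max(a, n−a) , K } / (2K) satisfies R_new(N/K) ≤ 5(K−L)(K−L+1)/(8K). (Note that L ≥ K/2 implies 2(K−L) ≤ K, so each minimum equals 2(K−L) − max(a, n−a).) -/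
open Finset

/-!
Removing the two end terms of `∑ a ≤ n + 2, max a (n + 2 - a)` and shifting the index leaves the sum
for `n` with every term raised by one. This recurrence of step two gives
`4 * ∑ a ≤ n, max a (n - a) = n * (3 * n + 4) + n % 2`, which covers both parities at once. With
`d = n + 1`, the sum of `2 * d - max a (n - a)` is then `(d * (5 * d + 2) + (1 - n % 2)) / 4`, and
`1 ≤ 3 * d` turns this into the bound `5 * d * (d + 1) / 4`.
-/

lemma sum_range_max_sub_add_two (n : ℕ) :
    ∑ a ∈ range (n + 3), max a (n + 2 - a) =
      ∑ a ∈ range (n + 1), max a (n - a) + (3 * n + 5) := by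
  have shift : ∀ a ∈ range (n + 1), max (a + 1) (n + 2 - (a + 1)) = max a (n - a) + 1 := by
    intro a ha
    have := mem_range.mp ha
    omega
  rw [sum_range_succ, sum_range_succ', sum_congr rfl shift, sum_add_distrib, sum_const,
    card_range, smul_eq_mul]
  omega

lemma four_mul_sum_range_max_sub (n : ℕ) :
    4 * ∑ a ∈ range (n + 1), max a (n - a) = n * (3 * n + 4) + n % 2 := by
  induction n using Nat.twoStepInduction with
  | zero => rfl
  | one => rfl
  | more n ih _ =>
    rw [sum_range_max_sub_add_two, mul_add, ih, Nat.add_mod_right]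
    ring

lemma sum_range_two_mul_succ_sub_max_sub {𝕜 : Type*} [Field 𝕜] [CharZero 𝕜] (n : ℕ) :
    ∑ a ∈ range (n + 1), (2 * ((n : 𝕜) + 1) - ((max a (n - a) : ℕ) : 𝕜)) =
      (((n : 𝕜) + 1) * (5 * ((n : 𝕜) + 1) + 2) + (1 - ((n % 2 : ℕ) : 𝕜))) / 4 := by
  have max_sum : 4 * ∑ a ∈ range (n + 1), ((max a (n - a) : ℕ) : 𝕜) =
      n * (3 * n + 4) + ((n % 2 : ℕ) : 𝕜) := by
    exact_mod_cast four_mul_sum_range_max_sub n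
  rw [eq_div_iff (OfNat.ofNat_ne_zero 4), sum_sub_distrib, sum_const, card_range, nsmul_eq_mul,
    Nat.cast_add_one]
  linear_combination -max_sum

lemma sum_range_two_mul_succ_sub_max_sub_le {𝕜 : Type*} [Field 𝕜] [LinearOrder 𝕜]
    [IsStrictOrderedRing 𝕜] (n : ℕ) :
    ∑ a ∈ range (n + 1), (2 * ((n : 𝕜) + 1) - ((max a (n - a) : ℕ) : 𝕜)) ≤
      5 * ((n : 𝕜) + 1) * ((n : 𝕜) + 1 + 1) / 4 := by
  rw [sum_range_two_mul_succ_sub_max_sub]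
  gcongr
  linarith [(n.cast_nonneg : (0 : 𝕜) ≤ n), ((n % 2).cast_nonneg : (0 : 𝕜) ≤ (n % 2 : ℕ))]

theorem stmt16_general (K L : ℕ) (hKL : L < K) (n : ℕ) (hn : n = K - L - 1) :
    ((Odd n →
        ∑ a ∈ Finset.range (n + 1), (2 * ((K : ℝ) - (L : ℝ)) - ((max a (n - a) : ℕ) : ℝ)) =
          ((K : ℝ) - (L : ℝ)) * (5 * (K : ℝ) - 5 * (L : ℝ) + 2) / 4) ∧
      (Even n →
        ∑ a ∈ Finset.range (n + 1), (2 * ((K : ℝ) - (L : ℝ)) - ((max a (n - a) : ℕ) : ℝ)) =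
          (((K : ℝ) - (L : ℝ)) * (5 * (K : ℝ) - 5 * (L : ℝ) + 2) + 1) / 4)) ∧
    (∑ a ∈ Finset.range (n + 1),
        min (2 * ((K : ℝ) - (L : ℝ)) - ((max a (n - a) : ℕ) : ℝ)) (K : ℝ)) / (2 * (K : ℝ)) ≤
      5 * ((K : ℝ) - (L : ℝ)) * ((K : ℝ) - (L : ℝ) + 1) / (8 * (K : ℝ)) := by
  have sub_eq : (K : ℝ) - L = n + 1 := by
    rw [sub_eq_iff_eq_add]
    exact_mod_cast (by omega : K = n + 1 + L)
  have five_mul_sub : 5 * (K : ℝ) - 5 * L = 5 * (n + 1) := by rw [← mul_sub, sub_eq]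
  rw [five_mul_sub, sub_eq]
  refine ⟨⟨fun n_odd => ?_, fun n_even => ?_⟩, ?_⟩
  · rw [sum_range_two_mul_succ_sub_max_sub, Nat.odd_iff.mp n_odd, Nat.cast_one, sub_self, add_zero]
  · rw [sum_range_two_mul_succ_sub_max_sub, Nat.even_iff.mp n_even, Nat.cast_zero, sub_zero]
  · calc
      _ ≤ (5 * ((n : ℝ) + 1) * ((n : ℝ) + 1 + 1) / 4) / (2 * K) := by
        gcongr
        exact (sum_le_sum fun a _ => min_le_left _ _).trans
          (sum_range_two_mul_succ_sub_max_sub_le n)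
      _ = 5 * ((n : ℝ) + 1) * ((n : ℝ) + 1 + 1) / (8 * K) := by
        rw [div_div]
        ring

/-- Corollary 11 of the paper: for `K > L ≥ K/2 ≥ 1` and
`n = K−L−1`, the sum `Σ_{a=0}^{n} (2(K−L) − max(a, n−a))` equals
`(K−L)(5K−5L+2)/4` when `n` is odd and `((K−L)(5K−5L+2)+1)/4` when `n` is even;
consequently `R_new(N/K) = Σ_{a=0}^{n} min{2(K−L)−max(a,n−a), K} / (2K)` is at
most `5(K−L)(K−L+1)/(8K)`. -/
theorem stmt16 (K L : ℕ) (hL : 1 ≤ L) (hKL : L < K) (hhalf : K ≤ 2 * L) (hK2 : 2 ≤ K)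
    (n : ℕ) (hn : n = K - L - 1) :
    ((Odd n →
        ∑ a ∈ Finset.range (n + 1), (2 * ((K : ℝ) - (L : ℝ)) - ((max a (n - a) : ℕ) : ℝ)) =
          ((K : ℝ) - (L : ℝ)) * (5 * (K : ℝ) - 5 * (L : ℝ) + 2) / 4) ∧
      (Even n →
        ∑ a ∈ Finset.range (n + 1), (2 * ((K : ℝ) - (L : ℝ)) - ((max a (n - a) : ℕ) : ℝ)) =
          (((K : ℝ) - (L : ℝ)) * (5 * (K : ℝ) - 5 * (L : ℝ) + 2) + 1) / 4)) ∧
    (∑ a ∈ Finset.range (n + 1),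
        min (2 * ((K : ℝ) - (L : ℝ)) - ((max a (n - a) : ℕ) : ℝ)) (K : ℝ)) / (2 * (K : ℝ)) ≤
      5 * ((K : ℝ) - (L : ℝ)) * ((K : ℝ) - (L : ℝ) + 1) / (8 * (K : ℝ)) :=
  stmt16_general K L hKL n hn
end

section
/- Let K, L, w be positive integers with w·L ≤ K. Then the number of w-element subsets s = {a_1,…,a_w} of [K] such that every two distinct elements a_j, a_l of s satisfy |a_j − a_l| ≥ L and K − |a_j − a_l| ≥ L equals (K/w)·C(K−wL+w−1, w−1); equivalently, w times this number of subsets equals K·C(K−wL+w−1, w−1). -/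
open Finset

/-!
Count the pairs `(s, x)` with `x ∈ s`, where `s` is an admissible subset of the cycle `ZMod K`.
Cutting the cycle at `x` turns the remaining elements of `s` into `w - 1` points, with consecutive
gaps at least `L`, of a line segment of `K - 2 * L + 1` points. The number of such configurations
on a segment satisfies Pascal's recursion, hence is a binomial coefficient; it does not depend on
`x`, so the number of pairs is `K` times it.
-/

section Powerset

variable {α β : Type*}

theorem card_filter_powersetCard_insert [DecidableEq α] {x : α} {A : Finset α} (hx : x ∉ A) (w : ℕ)
    (P : Finset α → Prop) [DecidablePred P] :
    #{s ∈ powersetCard (w + 1) (insert x A) | P s} =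
      #{s ∈ powersetCard (w + 1) A | P s} + #{t ∈ powersetCard w A | P (insert x t)} := by
  have hxt : ∀ n, ∀ t ∈ powersetCard n A, x ∉ t := fun n t ht hxt ↦
    hx ((mem_powersetCard.1 ht).1 hxt)
  have hdisj : Disjoint (powersetCard (w + 1) A) ((powersetCard w A).image (insert x)) := by
    refine disjoint_left.2 fun s hs hs' ↦ ?_
    obtain ⟨t, -, rfl⟩ := mem_image.1 hs'
    exact hxt _ _ hs (mem_insert_self x t)
  have hinj : Set.InjOn (insert x) (powersetCard w A : Set (Finset α)) := by
    intro t ht t' ht' h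
    rw [← erase_insert (hxt w t ht), h, erase_insert (hxt w t' ht')]
  rw [powersetCard_succ_insert hx, filter_union, card_union_of_disjoint
    (disjoint_filter_filter hdisj), filter_image,
    card_image_of_injOn (hinj.mono (filter_subset _ _))]

theorem card_filter_powersetCard_image [DecidableEq β] {f : α → β} {A : Finset α}
    (hf : Set.InjOn f A) (w : ℕ) (P : Finset β → Prop) [DecidablePred P] :
    #{s ∈ powersetCard w (A.image f) | P s} = #{t ∈ powersetCard w A | P (t.image f)} := by
  have hinj : Set.InjOn (fun t ↦ image f t) (powersetCard w A : Set (Finset α)) :=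
    (image_injOn_powerset_of_injOn hf).mono fun t ht ↦
      mem_powerset.2 (mem_powersetCard.1 (mem_coe.1 ht)).1
  have himage : powersetCard w (A.image f) = (powersetCard w A).image (image f) := by
    ext s
    simp only [mem_powersetCard, mem_image, subset_image_iff]
    constructor
    · rintro ⟨⟨t, htA, rfl⟩, hw⟩
      exact ⟨t, ⟨htA, by rwa [card_image_of_injOn (hf.mono htA)] at hw⟩, rfl⟩
    · rintro ⟨t, ⟨htA, rfl⟩, rfl⟩
      exact ⟨⟨t, htA, rfl⟩, card_image_of_injOn (hf.mono htA)⟩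
  rw [himage, filter_image, card_image_of_injOn (hinj.mono (filter_subset _ _))]

theorem filter_powersetCard_forall_mem_and (w : ℕ) (A : Finset α) (p : α → Prop) [DecidablePred p]
    (P : Finset α → Prop) [DecidablePred P] :
    {t ∈ powersetCard w A | (∀ a ∈ t, p a) ∧ P t} = {t ∈ powersetCard w {a ∈ A | p a} | P t} := by
  ext t
  simp only [mem_filter, mem_powersetCard, subset_iff]
  grind

end Powerset

/-- A set of integer points on a line is `L`-separated if any two of its points are at distance at
least `L`. -/
def IsSeparated (L : ℕ) (s : Finset ℕ) : Prop :=
  ∀ a ∈ s, ∀ b ∈ s, a < b → a + L ≤ b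

instance (L : ℕ) : DecidablePred (IsSeparated L) := fun s ↦
  inferInstanceAs (Decidable (∀ a ∈ s, ∀ b ∈ s, a < b → a + L ≤ b))

theorem isSeparated_insert_of_forall_lt {L c : ℕ} {t : Finset ℕ} (hc : ∀ a ∈ t, a < c) :
    IsSeparated L (insert c t) ↔ (∀ a ∈ t, a + L ≤ c) ∧ IsSeparated L t := by
  simp only [IsSeparated, mem_insert]
  grind

theorem card_isSeparated_Ico_add_one (d c n w : ℕ) :
    #{s ∈ powersetCard (w + 1) (Ico c (c + n + 1)) | IsSeparated (d + 1) s} =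
      #{s ∈ powersetCard (w + 1) (Ico c (c + n)) | IsSeparated (d + 1) s} +
        #{s ∈ powersetCard w (Ico c (c + (n - d))) | IsSeparated (d + 1) s} := by
  have hfilter : {a ∈ Ico c (c + n) | a + (d + 1) ≤ c + n} = Ico c (c + (n - d)) := by
    ext a
    simp only [mem_filter, mem_Ico]
    omega
  rw [← insert_Ico_right_eq_Ico_add_one (Nat.le_add_right c n),
    card_filter_powersetCard_insert right_notMem_Ico, ← hfilter,
    ← filter_powersetCard_forall_mem_and]
  congr 2
  refine filter_congr fun t ht ↦ isSeparated_insert_of_forall_lt fun a ha ↦ ?_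
  exact (mem_Ico.1 ((mem_powersetCard.1 ht).1 ha)).2

-- Shrinking each of the `w - 1` gaps by `d` leaves an arbitrary `w`-subset of `n - (w - 1) * d`
-- points; the closed form avoids the truncated `w - 1`.
theorem card_isSeparated_Ico (d c n w : ℕ) :
    #{s ∈ powersetCard w (Ico c (c + n)) | IsSeparated (d + 1) s} = (n + d - w * d).choose w := by
  induction n using Nat.strong_induction_on generalizing w with
  | _ n ih =>
    rcases w with _ | w
    · simp [filter_singleton, IsSeparated]
    have hsucc : (w + 1) * d = w * d + d := Nat.succ_mul w d
    rcases n with _ | n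
    · simp [hsucc]
    rw [← add_assoc, card_isSeparated_Ico_add_one, ih n (by omega), ih (n - d) (by omega), hsucc]
    rcases Nat.eq_zero_or_pos w with rfl | hw
    · simp
    have hd : d ≤ w * d := Nat.le_mul_of_pos_left d hw
    rcases le_or_gt (w * d) n with hn | hn
    · rw [show n + 1 + d - (w * d + d) = (n - w * d) + 1 by omega,
        show n - d + d - w * d = n - w * d by omega,
        show n + d - (w * d + d) = n - w * d by omega, Nat.choose_succ_succ, add_comm]
    · rw [show n + 1 + d - (w * d + d) = 0 by omega, show n - d + d - w * d = 0 by omega,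
        show n + d - (w * d + d) = 0 by omega, Nat.choose_eq_zero_of_lt hw]
      simp

theorem card_isSeparated_Ico_of_mul_le {d w K : ℕ} (h : (w + 1) * (d + 1) ≤ K) (c : ℕ) :
    #{s ∈ powersetCard w (Ico c (c + (K - (2 * d + 1)))) | IsSeparated (d + 1) s} =
      (K - (w + 1) * (d + 1) + w).choose w := by
  rw [card_isSeparated_Ico]
  rcases Nat.eq_zero_or_pos w with rfl | hw
  · simp only [Nat.choose_zero_right]
  have hd : d ≤ w * d := Nat.le_mul_of_pos_left d hw
  have hexpand : (w + 1) * (d + 1) = w * d + w + d + 1 := by ring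
  congr 1
  omega

section Cyclic

variable {K : ℕ}

/-- A set of points on the cycle `ZMod K` is `L`-separated if any two of its points are at circular
distance at least `L`. The number of steps from `b` up to `a` is `(a - b).val`, and the circular
distance is the smaller of `(a - b).val` and `(b - a).val`, both of which the symmetric
quantification bounds. -/
def IsCyclicSeparated (L : ℕ) (s : Finset (ZMod K)) : Prop :=
  ∀ a ∈ s, ∀ b ∈ s, a ≠ b → L ≤ (a - b).val

instance (L : ℕ) : DecidablePred (IsCyclicSeparated (K := K) L) := fun s ↦
  inferInstanceAs (Decidable (∀ a ∈ s, ∀ b ∈ s, a ≠ b → L ≤ (a - b).val))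

theorem val_natCast_sub_natCast_of_le {a b : ℕ} (hab : a ≤ b) (hba : b < a + K) :
    ((b : ZMod K) - a).val = b - a := by
  rw [← Nat.cast_sub hab, ZMod.val_natCast_of_lt (by omega)]

theorem val_natCast_sub_natCast_of_lt {a b : ℕ} (hab : a < b) (hba : b < a + K) :
    ((a : ZMod K) - b).val = K + a - b := by
  have hcast : (a : ZMod K) = (K + a : ℕ) := by simp
  rw [hcast, val_natCast_sub_natCast_of_le (by omega) (by omega)]

theorem injOn_natCast_Ico (c : ℕ) : Set.InjOn (Nat.cast : ℕ → ZMod K) (Ico c (c + K)) := by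
  intro a ha b hb hab
  simp only [coe_Ico, Set.mem_Ico] at ha hb
  exact ((ZMod.natCast_eq_natCast_iff a b K).1 hab).eq_of_abs_lt (by rw [abs_lt]; omega)

theorem image_natCast_Ico [NeZero K] (c : ℕ) :
    (Ico c (c + K)).image (Nat.cast : ℕ → ZMod K) = univ :=
  eq_univ_of_card _ <| by
    rw [card_image_of_injOn (injOn_natCast_Ico c), Nat.card_Ico, ZMod.card, Nat.add_sub_cancel_left]

theorem isCyclicSeparated_image_natCast {L c : ℕ} {t : Finset ℕ} (ht : t ⊆ Ico c (c + K)) :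
    IsCyclicSeparated L (t.image (Nat.cast : ℕ → ZMod K)) ↔
      ∀ a ∈ t, ∀ b ∈ t, a < b → a + L ≤ b ∧ b + L ≤ K + a := by
  have hmem : ∀ a ∈ t, c ≤ a ∧ a < c + K := fun a ha ↦ mem_Ico.1 (ht ha)
  have hne : ∀ a ∈ t, ∀ b ∈ t, ((a : ZMod K) ≠ b ↔ a ≠ b) := fun a ha b hb ↦
    ((injOn_natCast_Ico c).eq_iff (ht ha) (ht hb)).not
  simp only [IsCyclicSeparated, forall_mem_image]
  constructor
  · intro h a ha b hb hab
    have hup := h hb ha ((hne b hb a ha).2 hab.ne')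
    have hdown := h ha hb ((hne a ha b hb).2 hab.ne)
    have hlt : b < a + K := (hmem b hb).2.trans_le (Nat.add_le_add_right (hmem a ha).1 K)
    rw [val_natCast_sub_natCast_of_le hab.le hlt] at hup
    rw [val_natCast_sub_natCast_of_lt hab hlt] at hdown
    omega
  · intro h a ha b hb hab
    have ha' := hmem a ha
    have hb' := hmem b hb
    rcases lt_or_gt_of_ne ((hne a ha b hb).1 hab) with hlt | hlt
    · rw [val_natCast_sub_natCast_of_lt hlt (by omega)]
      have := h a ha b hb hlt
      omega
    · rw [val_natCast_sub_natCast_of_le hlt.le (by omega)]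
      have := h b hb a ha hlt
      omega

theorem isCyclicSeparated_image_natCast_iff_abs {L c : ℕ} {t : Finset ℕ}
    (ht : t ⊆ Ico c (c + K)) :
    IsCyclicSeparated L (t.image (Nat.cast : ℕ → ZMod K)) ↔
      ∀ a ∈ t, ∀ b ∈ t, a ≠ b →
        (L : ℤ) ≤ |(a : ℤ) - (b : ℤ)| ∧ (L : ℤ) ≤ (K : ℤ) - |(a : ℤ) - (b : ℤ)| := by
  rw [isCyclicSeparated_image_natCast ht]
  constructor
  · intro h a ha b hb hab
    rcases lt_or_gt_of_ne hab with hlt | hlt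
    · have := h a ha b hb hlt
      rw [abs_of_nonpos] <;> omega
    · have := h b hb a ha hlt
      rw [abs_of_nonneg] <;> omega
  · intro h a ha b hb hab
    have := h a ha b hb hab.ne
    rw [abs_of_nonpos (by omega)] at this
    omega

theorem isCyclicSeparated_image_natCast_insert {L c : ℕ} {t : Finset ℕ} (hK : 0 < K)
    (ht : t ⊆ Ico (c + 1) (c + K)) :
    IsCyclicSeparated L ((insert c t).image (Nat.cast : ℕ → ZMod K)) ↔
      (∀ a ∈ t, c + L ≤ a ∧ a + L ≤ K + c) ∧ IsSeparated L t := by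
  have hmem : ∀ a ∈ t, c + 1 ≤ a ∧ a < c + K := fun a ha ↦ mem_Ico.1 (ht ha)
  rw [isCyclicSeparated_image_natCast (c := c)]
  · simp only [IsSeparated, mem_insert]
    grind
  · grind

theorem card_isCyclicSeparated_mem [NeZero K] {d w : ℕ} (h : (w + 1) * (d + 1) ≤ K)
    (x : ZMod K) :
    #{s ∈ powersetCard (w + 1) univ | IsCyclicSeparated (d + 1) s ∧ x ∈ s} =
      (K - (w + 1) * (d + 1) + w).choose w := by
  obtain ⟨c, rfl⟩ : ∃ c : ℕ, (c : ZMod K) = x := ⟨x.val, ZMod.natCast_zmod_val x⟩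
  have hK : 0 < K := NeZero.pos K
  have hfilter : {a ∈ Ico (c + 1) (c + K) | c + (d + 1) ≤ a ∧ a + (d + 1) ≤ K + c} =
      Ico (c + (d + 1)) (c + (d + 1) + (K - (2 * d + 1))) := by
    ext a
    simp only [mem_filter, mem_Ico]
    omega
  have hIco : insert c (Ico (c + 1) (c + K)) = Ico c (c + K) :=
    insert_Ico_add_one_left_eq_Ico (Nat.lt_add_of_pos_right hK)
  have havoid : #{s ∈ powersetCard (w + 1) (Ico (c + 1) (c + K)) |
      IsCyclicSeparated (d + 1) (s.image (Nat.cast : ℕ → ZMod K)) ∧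
        (c : ZMod K) ∈ s.image (Nat.cast : ℕ → ZMod K)} = 0 := by
    refine card_eq_zero.2 (filter_eq_empty_iff.2 fun s hs ⟨_, hc⟩ ↦ ?_)
    obtain ⟨a, ha, hac⟩ := mem_image.1 hc
    have ha' := (mem_powersetCard.1 hs).1 ha
    have : a = c := injOn_natCast_Ico c (hIco ▸ mem_insert_of_mem ha') (by simp [hK]) hac
    grind
  rw [← image_natCast_Ico c, card_filter_powersetCard_image (injOn_natCast_Ico c), ← hIco,
    card_filter_powersetCard_insert (by simp), havoid, zero_add,
    ← card_isSeparated_Ico_of_mul_le h (c + (d + 1)), ← hfilter,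
    ← filter_powersetCard_forall_mem_and]
  refine congrArg card (filter_congr fun t ht ↦ ?_)
  rw [and_iff_left (mem_image_of_mem _ (mem_insert_self c t)),
    isCyclicSeparated_image_natCast_insert hK (mem_powersetCard.1 ht).1]

theorem mul_card_isCyclicSeparated [NeZero K] {d w : ℕ} (h : (w + 1) * (d + 1) ≤ K) :
    (w + 1) * #{s ∈ powersetCard (w + 1) (univ : Finset (ZMod K)) | IsCyclicSeparated (d + 1) s} =
      K * (K - (w + 1) * (d + 1) + w).choose w := by
  have hcount := sum_card (B := {s ∈ powersetCard (w + 1) univ | IsCyclicSeparated (d + 1) s})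
    fun x : ZMod K ↦ by rw [filter_filter, card_isCyclicSeparated_mem h x]
  rw [ZMod.card, sum_const_nat fun s hs ↦ (mem_powersetCard.1 (mem_filter.1 hs).1).2] at hcount
  rw [mul_comm, hcount]

end Cyclic

/-- the number of `w`-element subsets of `[K]` whose pairwise
circular distances on the cycle of length `K` are all at least `L` (the number
`|Ŝ|` of subfile index sets in the uncoded placement policy) satisfies
`w · |Ŝ| = K·C(K−wL+w−1, w−1)`, i.e. `|Ŝ| = (K/w)·C(K−wL+w−1, w−1)`. -/
theorem stmt17 (K L w : ℕ) (hK : 1 ≤ K) (hL : 1 ≤ L) (hw : 1 ≤ w) (hwL : w * L ≤ K) :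
    w * (((Finset.Icc 1 K).powersetCard w).filter (fun s =>
        ∀ a : ℕ, a ∈ s → ∀ b : ℕ, b ∈ s → a ≠ b →
          (L : ℤ) ≤ |(a : ℤ) - (b : ℤ)| ∧ (L : ℤ) ≤ (K : ℤ) - |(a : ℤ) - (b : ℤ)|)).card =
      K * Nat.choose (K - w * L + w - 1) (w - 1) := by
  obtain ⟨d, rfl⟩ := Nat.exists_eq_add_of_le' hL
  obtain ⟨v, rfl⟩ := Nat.exists_eq_add_of_le' hw
  have : NeZero K := ⟨by omega⟩
  have hIcc : Icc 1 K = Ico 1 (1 + K) := by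
    rw [add_comm]; rfl
  rw [Nat.add_sub_cancel, ← add_assoc, Nat.add_sub_cancel, ← mul_card_isCyclicSeparated hwL,
    ← image_natCast_Ico 1, card_filter_powersetCard_image (injOn_natCast_Ico 1), hIcc]
  refine congrArg (fun F ↦ (v + 1) * #F) (filter_congr fun t ht ↦ ?_)
  exact (isCyclicSeparated_image_natCast_iff_abs (mem_powersetCard.1 ht).1).symm
end

section
/- Consider a single unicast index coding problem with n users: message index set [n], user k demands W_k = {k} and knows K_k ⊆ [n] \ {k}. Say user j interferes with user k if j ≠ k and j ∉ K_k; a coloring c : [n] → ℕ is proper if no user shares its color with any user that interferes with it (equivalently, c(j) = c(k) with j ≠ k implies j ∈ K_k and k ∈ K_j); and for a proper coloring c let D(c) = max_{k∈[n]} |c(N⁺(k))|, where N⁺(k) = {k} ∪ { j : j interferes with k } is the closed anti-outneighborhood of user k and c(N⁺(k)) is the set of colors assigned to N⁺(k). Then for every proper coloring c, the optimal broadcast rate R* of the ICP satisfies R* ≤ D(c); in particular R* ≤ χ_l, the local chromatic number min_c D(c) over all proper colorings c. -/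
open Finset

/-- Users (= message indices) of a single unicast ICP with `n` users: `[n]`. -/
abbrev Usr (n : ℕ) : Type := {k : ℕ // k ∈ Finset.Icc 1 n}

/-- A valid index code of length `ℓ` for message length `t`. -/
def ValidCode {I U : Type} (W Kn : U → Set I) (t ℓ : ℕ) : Prop :=
  ∃ E : (I → Fin t → Bool) → Fin ℓ → Bool,
  ∃ D : ∀ u : U, (Fin ℓ → Bool) → (↥(Kn u) → Fin t → Bool) → (↥(W u) → Fin t → Bool),
    ∀ x : I → Fin t → Bool, ∀ u : U,
      D u (E x) (fun m => x m.1) = fun m => x m.1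

/-- The optimal broadcast rate of an index coding problem. -/
noncomputable def optRate {I U : Type} (W Kn : U → Set I) : ℝ :=
  sInf {ρ : ℝ | ∃ t ℓ : ℕ, 1 ≤ t ∧ ValidCode W Kn t ℓ ∧ ρ = (ℓ : ℝ) / (t : ℝ)}

/-- Want sets of a single unicast ICP with `n` users: user `k` demands message `k`. -/
def suicpW (n : ℕ) : Usr n → Set (Usr n) := fun u => {x | x.1 = u.1}

/-- Known sets of a single unicast ICP with `n` users, induced by `Kn : ℕ → Set ℕ`. -/
def suicpK (n : ℕ) (Kn : ℕ → Set ℕ) : Usr n → Set (Usr n) := fun u => {x | x.1 ∈ Kn u.1}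

/-!
Over a field `F` with `2 ^ t` elements, give the colors distinct points of `F` and broadcast the
`D` power-weighted sums `∑ j, a j ^ r * x j`, `r < D`, where `a j` is the point of the color of `j`:
this is a Vandermonde (Reed–Solomon) code with one column per color. User `k` subtracts the messages
it knows. The remaining ones carry at most `D` colors, and `k` is alone in its own, so the
polynomial of degree `< D` that vanishes at all the other colors extracts a nonzero multiple of
`x k` from the broadcast. The code has length `D * t` for message length `t`, hence rate `D`.
-/

open Polynomial

section Vandermonde

variable {R ι : Type*} [Fintype ι]

lemma sum_eval_mul_eq_zero [Semiring R] {a z : ι → R} {d : ℕ} {p : R[X]}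
    (hp : p.natDegree < d) (hz : ∀ r < d, ∑ j, a j ^ r * z j = 0) :
    ∑ j, p.eval (a j) * z j = 0 := by
  calc ∑ j, p.eval (a j) * z j
      = ∑ j, ∑ r ∈ range d, p.coeff r * (a j ^ r * z j) := by
        simp only [eval_eq_sum_range' hp, sum_mul, mul_assoc]
    _ = ∑ r ∈ range d, p.coeff r * ∑ j, a j ^ r * z j := by
        simp only [mul_sum, sum_comm (s := univ)]
    _ = 0 := sum_eq_zero fun r hr => by rw [hz r (mem_range.1 hr), mul_zero]

lemma eq_zero_of_sum_pow_mul_eq_zero [CommRing R] [IsDomain R] {a z : ι → R}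
    {S : Finset R} {k : ι} (hmem : ∀ j, z j ≠ 0 → a j ∈ S)
    (hne : ∀ j, z j ≠ 0 → a j = a k → j = k)
    (hz : ∀ r < #S, ∑ j, a j ^ r * z j = 0) : z k = 0 := by
  classical
  by_contra hk
  let p : R[X] := Lagrange.nodal (S.erase (a k)) id
  have hdeg : p.natDegree < #S :=
    Lagrange.natDegree_nodal.trans_lt (card_erase_lt_of_mem (hmem k hk))
  have hpk : p.eval (a k) ≠ 0 :=
    Lagrange.eval_nodal_not_at_node fun s hs => (ne_of_mem_erase hs).symm
  have hsingle : ∑ j, p.eval (a j) * z j = p.eval (a k) * z k := by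
    refine Fintype.sum_eq_single k fun j hjk => ?_
    by_cases hj : z j = 0
    · rw [hj, mul_zero]
    · have hroot : a j ∈ S.erase (a k) := mem_erase.2 ⟨fun h => hjk (hne j hj h), hmem j hj⟩
      rw [show p.eval (a j) = 0 from Lagrange.eval_nodal_at_node (v := id) hroot, zero_mul]
  exact mul_ne_zero hpk hk (hsingle ▸ sum_eval_mul_eq_zero hdeg hz)

end Vandermonde

section IndexCode

variable {I U A B : Type*} {W K : U → Set I}

/-- `E` is the encoding map of an index code over an arbitrary message alphabet `A` and an arbitrary
set `B` of broadcasts, where user `u` demands `W u` and knows `K u`. Decoders are not part of the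
data: they exist exactly when the broadcast and the side information determine the demand. -/
def IsIndexCode (W K : U → Set I) (E : (I → A) → B) : Prop :=
  ∀ u x y, E x = E y → Set.EqOn x y (K u) → Set.EqOn x y (W u)

lemma IsIndexCode.recode {A' B' : Type*} {E : (I → A) → B} (hE : IsIndexCode W K E)
    {φ : A' → A} (hφ : φ.Injective) {ψ : B → B'} (hψ : ψ.Injective) :
    IsIndexCode W K fun x : I → A' => ψ (E (φ ∘ x)) := fun u _ _ hxy hK _ hm =>
  hφ (hE u _ _ (hψ hxy) (fun _ hj => congrArg φ (hK hj)) hm)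

end IndexCode

section Rate

variable {I U : Type} {W K : U → Set I} {t ℓ : ℕ}

lemma IsIndexCode.validCode {E : (I → Fin t → Bool) → Fin ℓ → Bool} (hE : IsIndexCode W K E) :
    ValidCode W K t ℓ := by
  let observed (u : U) (x : I → Fin t → Bool) := (E x, (K u).domRestrict x)
  let decode (u : U) (e : Fin ℓ → Bool) (s : K u → Fin t → Bool) : W u → Fin t → Bool :=
    Function.extend (observed u) (W u).domRestrict (fun _ _ _ => false) (e, s)
  have hfactor (u : U) : Function.FactorsThrough (W u).domRestrict (observed u) := by
    intro x y hxy
    obtain ⟨hbroadcast, hknown⟩ := Prod.ext_iff.1 hxy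
    exact Set.domRestrict_eq_domRestrict_iff.2
      (hE u x y hbroadcast (Set.domRestrict_eq_domRestrict_iff.1 hknown))
  exact ⟨E, decode, fun x u => (hfactor u).extend_apply _ x⟩

lemma ValidCode.optRate_le (ht : 1 ≤ t) (h : ValidCode W K t ℓ) : optRate W K ≤ ℓ / t := by
  refine csInf_le ⟨0, ?_⟩ ⟨t, ℓ, ht, h, rfl⟩
  rintro _ ⟨t', ℓ', -, -, rfl⟩
  positivity

lemma IsIndexCode.optRate_le {A : Type*} {D : ℕ} (hA : Nat.card A = 2 ^ t) (ht : 1 ≤ t)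
    {E : (I → A) → Fin D → A} (hE : IsIndexCode W K E) : optRate W K ≤ D := by
  have : Finite A := Nat.finite_of_card_ne_zero (by rw [hA]; positivity)
  have hbits : Nat.card (Fin t → Bool) = Nat.card A := by simp [hA]
  obtain ⟨φ⟩ : Nonempty ((Fin t → Bool) ≃ A) := Finite.card_eq.1 hbits
  let ψ : (Fin D → A) ≃ (Fin (D * t) → Bool) :=
    ((Equiv.refl _).arrowCongr φ.symm).trans <|
      (Equiv.curry _ _ _).symm.trans (finProdFinEquiv.arrowCongr (Equiv.refl _))
  have hcode : ValidCode W K t (D * t) := (hE.recode φ.injective ψ.injective).validCode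
  calc optRate W K ≤ ((D * t : ℕ) : ℝ) / t := hcode.optRate_le ht
    _ = D := by
      have : (t : ℝ) ≠ 0 := by positivity
      push_cast
      field_simp

end Rate

section Coloring

variable {I U C : Type*} {W K : U → Set I}

/-- The closed anti-outneighborhood of a message `m` demanded by a user with side information `K`:
`m` itself and the messages interfering with its reception. -/
def closedAntiOutNhd (K : Set I) (m : I) : Set I := insert m Kᶜ

/-- `c` is a proper coloring of the messages: for a user demanding `m`, every message that it does
not know, other than `m`, has a color different from that of `m`. For a single unicast problem this
is properness of a coloring of the users. -/
def IsProperColoring (W K : U → Set I) (c : I → C) : Prop :=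
  ∀ u, ∀ m ∈ W u, ∀ j ∉ K u, c j = c m → j = m

lemma IsProperColoring.comp_injOn {C' : Type*} {c : I → C} (hc : IsProperColoring W K c)
    {f : C → C'} (hf : Set.InjOn f (Set.range c)) : IsProperColoring W K (f ∘ c) :=
  fun u m hm j hj hjm => hc u m hm j hj (hf ⟨j, rfl⟩ ⟨m, rfl⟩ hjm)

/-- The Vandermonde encoder with `D` check symbols, in which message `j` is attached to the
evaluation point `a j`. Messages of the same color share their evaluation point. -/
def vandermondeEncode {R : Type*} [Semiring R] [Fintype I] (a : I → R) (D : ℕ) (x : I → R) :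
    Fin D → R :=
  fun r => ∑ j, a j ^ (r : ℕ) * x j

lemma isIndexCode_vandermondeEncode {R : Type*} [CommRing R] [IsDomain R] [Fintype I] {a : I → R}
    (ha : IsProperColoring W K a) {D : ℕ}
    (hD : ∀ u, ∀ m ∈ W u, (a '' closedAntiOutNhd (K u) m).ncard ≤ D) :
    IsIndexCode W K (vandermondeEncode a D) := by
  intro u x y hxy hK m hm
  have hunknown (j : I) (hj : x j - y j ≠ 0) : j ∉ K u := fun hjK => hj (sub_eq_zero.2 (hK hjK))
  have hfin : (a '' closedAntiOutNhd (K u) m).Finite := Set.toFinite _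
  have hcard : #hfin.toFinset ≤ D := by
    rw [← Set.ncard_eq_toFinset_card _ hfin]
    exact hD u m hm
  refine sub_eq_zero.1 (eq_zero_of_sum_pow_mul_eq_zero (a := a) (z := fun j => x j - y j)
    (S := hfin.toFinset) (fun j hj => ?_) (fun j hj => ha u m hm j (hunknown j hj))
    fun r hr => ?_)
  · exact hfin.mem_toFinset.2 ⟨j, Or.inr (hunknown j hj), rfl⟩
  · have hsymbol : ∑ j, a j ^ r * x j = ∑ j, a j ^ r * y j :=
      congrFun hxy ⟨r, hr.trans_le hcard⟩
    simp only [mul_sub, sum_sub_distrib, hsymbol, sub_self]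

end Coloring

lemma exists_injOn_galoisField (p : ℕ) [Fact p.Prime] {C : Type*} {s : Set C} (hs : s.Finite) :
    ∃ t, 1 ≤ t ∧ ∃ f : C → GaloisField p t, Set.InjOn f s := by
  have hp : 1 < p := (Fact.out : p.Prime).one_lt
  refine ⟨s.ncard + 1, Nat.le_add_left _ _, ?_⟩
  have hcard : s.encard ≤ (Set.univ : Set (GaloisField p (s.ncard + 1))).encard := by
    rw [← hs.cast_ncard_eq, ← Set.finite_univ.cast_ncard_eq, Set.ncard_univ,
      GaloisField.card p _ (Nat.succ_ne_zero _)]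
    exact_mod_cast (Nat.lt_succ_self _).le.trans (Nat.lt_pow_self hp).le
  obtain ⟨f, -, hf⟩ := hs.exists_injOn_of_encard_le hcard
  exact ⟨f, hf⟩

theorem stmt18_general {I U : Type} {C : Type*} [Finite I] {W K : U → Set I} {c : I → C}
    (hc : IsProperColoring W K c) {D : ℕ}
    (hD : ∀ u, ∀ m ∈ W u, (c '' closedAntiOutNhd (K u) m).ncard ≤ D) : optRate W K ≤ D := by
  have := Fintype.ofFinite I
  obtain ⟨t, ht, f, hf⟩ := exists_injOn_galoisField 2 (Set.finite_range c)
  have hD' (u : U) (m : I) (hm : m ∈ W u) :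
      ((f ∘ c) '' closedAntiOutNhd (K u) m).ncard ≤ D := by
    rw [Set.image_comp]
    exact (Set.ncard_image_le (Set.toFinite _)).trans (hD u m hm)
  exact (isIndexCode_vandermondeEncode (hc.comp_injOn hf) hD').optRate_le
    (GaloisField.card 2 t (by omega)) ht

section SingleUnicast

variable {n : ℕ} {Kn : ℕ → Set ℕ}

lemma isProperColoring_suicp {C : Type*} {c : ℕ → C}
    (hc : ∀ j ∈ Icc 1 n, ∀ k ∈ Icc 1 n, j ≠ k → c j = c k → j ∈ Kn k) :
    IsProperColoring (suicpW n) (suicpK n Kn) (c ∘ Subtype.val) := by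
  intro u m hm j hj hjm
  obtain rfl : m = u := Subtype.ext hm
  by_contra hne
  exact hj (hc j j.2 m m.2 (Subtype.coe_ne_coe.2 hne) hjm)

lemma image_val_closedAntiOutNhd_suicp (u : Usr n) :
    Subtype.val '' closedAntiOutNhd (suicpK n Kn u) u =
      {j | j ∈ Icc 1 n ∧ (j = u ∨ (j ≠ u ∧ j ∉ Kn u))} := by
  ext j
  simp only [closedAntiOutNhd, suicpK, Set.mem_image, Set.mem_insert_iff, Set.mem_compl_iff,
    Set.mem_ofPred_eq, Subtype.exists, exists_and_right, exists_eq_right,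
    exists_prop, Subtype.ext_iff]
  tauto

lemma ncard_image_closedAntiOutNhd_suicp_le {C : Type*} {c : ℕ → C} {D : ℕ}
    (hD : ∀ k ∈ Icc 1 n,
      (c '' {j | j ∈ Icc 1 n ∧ (j = k ∨ (j ≠ k ∧ j ∉ Kn k))}).ncard ≤ D)
    (u m : Usr n) (hm : m ∈ suicpW n u) :
    ((c ∘ Subtype.val) '' closedAntiOutNhd (suicpK n Kn u) m).ncard ≤ D := by
  obtain rfl : m = u := Subtype.ext hm
  rw [Set.image_comp, image_val_closedAntiOutNhd_suicp]
  exact hD m m.2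

end SingleUnicast

/-- Lemma 6 of the paper, local chromatic number upper bound:
for a single unicast ICP with `n` users, any proper coloring `c`, and any `D`
bounding the number of distinct colors on every closed anti-outneighborhood
`N⁺(k) = {k} ∪ {j : j interferes with k}`, the optimal broadcast rate satisfies
`R* ≤ D`; in particular `R* ≤ χ_l`, the local chromatic number. -/
theorem stmt18 (n : ℕ) (Kn : ℕ → Set ℕ)
    (hKn : ∀ k ∈ Finset.Icc 1 n, Kn k ⊆ {j | j ∈ Finset.Icc 1 n ∧ j ≠ k})
    (c : ℕ → ℕ)
    (hproper : ∀ j ∈ Finset.Icc 1 n, ∀ k ∈ Finset.Icc 1 n,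
      j ≠ k → c j = c k → j ∈ Kn k ∧ k ∈ Kn j)
    (D : ℕ)
    (hD : ∀ k ∈ Finset.Icc 1 n,
      (c '' {j | j ∈ Finset.Icc 1 n ∧ (j = k ∨ (j ≠ k ∧ j ∉ Kn k))}).ncard ≤ D) :
    optRate (suicpW n) (suicpK n Kn) ≤ (D : ℝ) := by
  exact stmt18_general
    (isProperColoring_suicp fun j hj k hk hjk h => (hproper j hj k hk hjk h).1)
    (ncard_image_closedAntiOutNhd_suicp_le hD)
end
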